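/- arXiv:1404.7098 — 4 statements merged into one kernel-verified Lean document; each statement's English description precedes it below -/
import Mathlib

section
/- Fix μ>0 and Y∈ℝ⁴, and let G(X) = 1/⟨X̂−Ŷ, X̂−Ŷ⟩₍₁,₄₎, a smooth function of X on ℝ⁴∖{Y}. Then on ℝ⁴∖{Y}: (i) (d̃eg G)(X) = (1 − √(μ⁻²+N(Y))/√(μ⁻²+N(X))) · 2μ⁻² / (⟨X̂−Ŷ, X̂−Ŷ⟩₍₁,₄₎)², and (ii) □̃_μ G = 0, where d̃eg and □̃_μ act in the variable X. -/
noncomputable section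

/-- `N(X) = (x⁰)² + (x¹)² + (x²)² + (x³)²` for `X ∈ ℝ⁴`. -/
def Nq (X : Fin 4 → ℝ) : ℝ := ∑ i, X i ^ 2

/-- The indefinite inner product `⟨W,W′⟩₍₁,₄₎` on `ℝ⁵`. -/
def form14 (W W' : Fin 5 → ℝ) : ℝ :=
  W 0 * W' 0 - W 1 * W' 1 - W 2 * W' 2 - W 3 * W' 3 - W 4 * W' 4

/-- `X̂ = (√(μ⁻² + N(X)), x⁰, x¹, x², x³) ∈ ℝ⁵`. -/
def hat (μ : ℝ) (X : Fin 4 → ℝ) : Fin 5 → ℝ :=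
  Fin.cons (Real.sqrt ((μ ^ 2)⁻¹ + Nq X)) X

/-- The `i`-th standard basis vector of `ℝ⁴`. -/
def e4 (i : Fin 4) : Fin 4 → ℝ := Pi.single i 1

/-- The partial derivative `∂f/∂xⁱ`. -/
def pd (i : Fin 4) (f : (Fin 4 → ℝ) → ℝ) (X : Fin 4 → ℝ) : ℝ := fderiv ℝ f X (e4 i)

/-- The Laplacian `□f = Σᵢ ∂²f/∂(xⁱ)²`. -/
def lap (f : (Fin 4 → ℝ) → ℝ) (X : Fin 4 → ℝ) : ℝ := ∑ i, pd i (pd i f) X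

/-- The degree operator `deg f = Σᵢ xⁱ ∂f/∂xⁱ`. -/
def degOp (f : (Fin 4 → ℝ) → ℝ) (X : Fin 4 → ℝ) : ℝ := ∑ i, X i * pd i f X

/-- `d̃eg f = f + deg f`. -/
def tdeg (f : (Fin 4 → ℝ) → ℝ) (X : Fin 4 → ℝ) : ℝ := f X + degOp f X

/-- The conformal Laplacian `□̃_μ f = □f + μ²(deg(deg f) + 3·deg f + 2f)`. -/
def boxTilde (μ : ℝ) (f : (Fin 4 → ℝ) → ℝ) (X : Fin 4 → ℝ) : ℝ :=
  lap f X + μ ^ 2 * (degOp (degOp f) X + 3 * degOp f X + 2 * f X)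

/-!
Let `a = μ⁻²`. The map `X ↦ X̂` parametrizes the sheet `⟨W,W⟩₍₁,₄₎ = a`, `w⁰ > 0` of a hyperboloid,
and `L = □ + μ²(deg² + 3 deg)` is its Laplace–Beltrami operator in these coordinates, so that
`□̃_μ = L + 2μ²`. The restriction `t(X) = ⟨X̂,W⟩` of a linear function satisfies `L t = 4μ² t` and
`|∇t|² = μ² t² - ⟨W,W⟩`, whence `□̃_μ (φ ∘ t) = (μ² t² - ⟨W,W⟩) φ''(t) + 4μ² t φ'(t) + 2μ² φ(t)`.
For `W = Ŷ` one has `⟨X̂-Ŷ,X̂-Ŷ⟩ = 2a - 2t`, and `φ(t) = (2a - 2t)⁻¹` solves the resulting ordinary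
differential equation; the reversed Cauchy–Schwarz inequality `t > a` for `X ≠ Y` keeps it away
from its pole.
-/

open Topology

section DerivAlong

variable {E : Type*} [NormedAddCommGroup E] [NormedSpace ℝ E]

/-- The derivative of a function `f` along a vector field `V`. It covers both the partial
derivatives (`V` constant) and the degree operator (`V` the identity). -/
def derivAlong (V : E → E) (f : E → ℝ) (x : E) : ℝ := fderiv ℝ f x (V x)

variable {V : E → E} {f g : E → ℝ} {x : E}

lemma derivAlong_sub (hf : DifferentiableAt ℝ f x) (hg : DifferentiableAt ℝ g x) :
    derivAlong V (fun y => f y - g y) x = derivAlong V f x - derivAlong V g x := by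
  simp [derivAlong, fderiv_fun_sub hf hg]

lemma derivAlong_const_mul (c : ℝ) (hf : DifferentiableAt ℝ f x) :
    derivAlong V (fun y => c * f y) x = c * derivAlong V f x := by
  simp [derivAlong, fderiv_const_mul hf]

lemma derivAlong_mul (hf : DifferentiableAt ℝ f x) (hg : DifferentiableAt ℝ g x) :
    derivAlong V (fun y => f y * g y) x = f x * derivAlong V g x + g x * derivAlong V f x := by
  simp [derivAlong, fderiv_fun_mul hf hg]

lemma derivAlong_comp {φ : ℝ → ℝ} {φ' : ℝ} (hφ : HasDerivAt φ φ' (f x))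
    (hf : DifferentiableAt ℝ f x) : derivAlong V (φ ∘ f) x = φ' * derivAlong V f x := by
  simp [derivAlong, (hφ.comp_hasFDerivAt x hf.hasFDerivAt).fderiv]

lemma differentiableAt_derivAlong (hV : DifferentiableAt ℝ V x) (hf : ContDiffAt ℝ 2 f x) :
    DifferentiableAt ℝ (derivAlong V f) x :=
  ((hf.fderiv_right (m := 1) le_rfl).differentiableAt one_ne_zero).clm_apply hV

lemma derivAlong_derivAlong_comp {φ φ' : ℝ → ℝ} {φ'' : ℝ} (hV : DifferentiableAt ℝ V x)
    (hφ : ∀ᶠ u in 𝓝 (f x), HasDerivAt φ (φ' u) u) (hφ' : HasDerivAt φ' φ'' (f x))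
    (hf : ContDiffAt ℝ 2 f x) :
    derivAlong V (derivAlong V (φ ∘ f)) x =
      φ'' * derivAlong V f x ^ 2 + φ' (f x) * derivAlong V (derivAlong V f) x := by
  have hf_diff : DifferentiableAt ℝ f x := hf.differentiableAt two_ne_zero
  have hfirst : derivAlong V (φ ∘ f) =ᶠ[𝓝 x] fun y => (φ' ∘ f) y * derivAlong V f y := by
    filter_upwards [hf_diff.continuousAt.eventually hφ, hf.eventually (by simp)] with y hφy hfy
    exact derivAlong_comp hφy (hfy.differentiableAt two_ne_zero)
  calc derivAlong V (derivAlong V (φ ∘ f)) x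
      = derivAlong V (fun y => (φ' ∘ f) y * derivAlong V f y) x := by
        rw [derivAlong, hfirst.fderiv_eq, derivAlong]
    _ = φ'' * derivAlong V f x ^ 2 + φ' (f x) * derivAlong V (derivAlong V f) x := by
        rw [derivAlong_mul (hφ'.differentiableAt.comp x hf_diff)
          (differentiableAt_derivAlong hV hf), derivAlong_comp hφ' hf_diff, Function.comp_apply]
        ring

lemma derivAlong_dotProduct_const {ι : Type*} [Fintype ι] (V : (ι → ℝ) → ι → ℝ) (w X : ι → ℝ) :
    derivAlong V (fun Z => Z ⬝ᵥ w) X = V X ⬝ᵥ w := by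
  have hsum : HasFDerivAt (fun Z : ι → ℝ => ∑ i, Z i * w i) _ X :=
    HasFDerivAt.fun_sum fun i _ => (hasFDerivAt_apply (𝕜 := ℝ) i X).mul_const (w i)
  simp only [derivAlong, dotProduct, hsum.fderiv]
  simp [mul_comm]

end DerivAlong

lemma pd_eq_derivAlong (i : Fin 4) : pd i = derivAlong fun _ => e4 i := rfl

lemma degOp_eq_derivAlong : degOp = derivAlong id := by
  ext f X
  calc degOp f X = fderiv ℝ f X (∑ i, X i • e4 i) := by simp [degOp, pd]
    _ = derivAlong id f X := by simp [derivAlong, e4, ← pi_eq_sum_univ']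

section HyperbolicOperators

/-- The Laplace–Beltrami operator of the hyperboloid `⟨W,W⟩₍₁,₄₎ = μ⁻²` in the coordinates
`X ↦ X̂`; its inverse metric there is `δⁱʲ + μ² xⁱ xʲ`. -/
def hypLap (μ : ℝ) (f : (Fin 4 → ℝ) → ℝ) (X : Fin 4 → ℝ) : ℝ :=
  lap f X + μ ^ 2 * (degOp (degOp f) X + 3 * degOp f X)

/-- The squared length of the gradient of `f` for the hyperbolic metric of `hypLap`. -/
def hypGradSq (μ : ℝ) (f : (Fin 4 → ℝ) → ℝ) (X : Fin 4 → ℝ) : ℝ :=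
  ∑ i, pd i f X ^ 2 + μ ^ 2 * degOp f X ^ 2

lemma boxTilde_eq_hypLap_add (μ : ℝ) (f : (Fin 4 → ℝ) → ℝ) (X : Fin 4 → ℝ) :
    boxTilde μ f X = hypLap μ f X + 2 * μ ^ 2 * f X := by
  rw [boxTilde, hypLap]
  ring

lemma hypLap_comp (μ : ℝ) {f : (Fin 4 → ℝ) → ℝ} {X : Fin 4 → ℝ} {φ φ' : ℝ → ℝ} {φ'' : ℝ}
    (hφ : ∀ᶠ u in 𝓝 (f X), HasDerivAt φ (φ' u) u) (hφ' : HasDerivAt φ' φ'' (f X))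
    (hf : ContDiffAt ℝ 2 f X) :
    hypLap μ (φ ∘ f) X = φ'' * hypGradSq μ f X + φ' (f X) * hypLap μ f X := by
  have hlap : lap (φ ∘ f) X = φ'' * ∑ i, pd i f X ^ 2 + φ' (f X) * lap f X := by
    simp only [lap, pd_eq_derivAlong, Finset.mul_sum, ← Finset.sum_add_distrib,
      derivAlong_derivAlong_comp (differentiableAt_const _) hφ hφ' hf]
  rw [hypLap, hypGradSq, hypLap, hlap, degOp_eq_derivAlong,
    derivAlong_derivAlong_comp differentiableAt_id hφ hφ' hf,
    derivAlong_comp hφ.self_of_nhds (hf.differentiableAt two_ne_zero)]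
  ring

end HyperbolicOperators

section Height

/-- The `0`-th coordinate `√(μ⁻² + N(X))` of `X̂`. -/
def height (μ : ℝ) (X : Fin 4 → ℝ) : ℝ := Real.sqrt ((μ ^ 2)⁻¹ + Nq X)

lemma Nq_eq_dotProduct (X : Fin 4 → ℝ) : Nq X = X ⬝ᵥ X := by
  simp only [Nq, dotProduct, sq]

lemma Nq_nonneg (X : Fin 4 → ℝ) : 0 ≤ Nq X := Finset.sum_nonneg fun i _ => sq_nonneg (X i)

lemma Nq_pos {X : Fin 4 → ℝ} (hX : X ≠ 0) : 0 < Nq X := by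
  have hne : X ⬝ᵥ X ≠ 0 := dotProduct_self_eq_zero.not.2 hX
  exact (Nq_nonneg X).lt_of_ne' (Nq_eq_dotProduct X ▸ hne)

variable {μ : ℝ} {V : (Fin 4 → ℝ) → Fin 4 → ℝ}

lemma inv_sq_add_Nq_pos (hμ : μ ≠ 0) (X : Fin 4 → ℝ) : 0 < (μ ^ 2)⁻¹ + Nq X := by
  have := Nq_nonneg X
  positivity

lemma height_pos (hμ : μ ≠ 0) (X : Fin 4 → ℝ) : 0 < height μ X :=
  Real.sqrt_pos.2 (inv_sq_add_Nq_pos hμ X)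

lemma height_sq (hμ : μ ≠ 0) (X : Fin 4 → ℝ) : height μ X ^ 2 = (μ ^ 2)⁻¹ + Nq X :=
  Real.sq_sqrt (inv_sq_add_Nq_pos hμ X).le

lemma Nq_eq_height_sq_sub (hμ : μ ≠ 0) (X : Fin 4 → ℝ) : Nq X = height μ X ^ 2 - (μ ^ 2)⁻¹ :=
  eq_sub_of_add_eq' (height_sq hμ X).symm

lemma contDiff_Nq {n : WithTop ℕ∞} : ContDiff ℝ n Nq := by
  unfold Nq
  fun_prop

lemma contDiff_height {n : WithTop ℕ∞} (hμ : μ ≠ 0) : ContDiff ℝ n (height μ) :=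
  (contDiff_const.add contDiff_Nq).sqrt fun X => (inv_sq_add_Nq_pos hμ X).ne'

lemma differentiable_height (hμ : μ ≠ 0) : Differentiable ℝ (height μ) :=
  (contDiff_height (n := 1) hμ).differentiable one_ne_zero

lemma differentiable_inv_height (hμ : μ ≠ 0) : Differentiable ℝ fun X => (height μ X)⁻¹ :=
  (differentiable_height hμ).fun_inv fun X => (height_pos hμ X).ne'

lemma derivAlong_Nq (X : Fin 4 → ℝ) : derivAlong V Nq X = 2 * (X ⬝ᵥ V X) := by
  have hsum : HasFDerivAt (fun Z : Fin 4 → ℝ => ∑ i, Z i ^ 2) _ X :=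
    HasFDerivAt.fun_sum fun i _ => (hasFDerivAt_apply (𝕜 := ℝ) i X).pow 2
  have hfderiv : fderiv ℝ Nq X = _ := hsum.fderiv
  rw [derivAlong, hfderiv]
  simp [dotProduct, Finset.mul_sum, mul_assoc]

lemma derivAlong_height (hμ : μ ≠ 0) (X : Fin 4 → ℝ) :
    derivAlong V (height μ) X = (X ⬝ᵥ V X) / height μ X := by
  have hsqrt : HasDerivAt (fun u => Real.sqrt ((μ ^ 2)⁻¹ + u)) (1 / (2 * height μ X)) (Nq X) :=
    ((hasDerivAt_id _).const_add _).sqrt (inv_sq_add_Nq_pos hμ X).ne'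
  have hcomp := derivAlong_comp (V := V) hsqrt (contDiff_Nq.differentiable one_ne_zero X)
  rw [derivAlong_Nq] at hcomp
  have := height_pos hμ X
  calc derivAlong V (height μ) X = 1 / (2 * height μ X) * (2 * (X ⬝ᵥ V X)) := hcomp
    _ = (X ⬝ᵥ V X) / height μ X := by field_simp

lemma derivAlong_inv_height (hμ : μ ≠ 0) (X : Fin 4 → ℝ) :
    derivAlong V (fun Z => (height μ Z)⁻¹) X = -(X ⬝ᵥ V X) / height μ X ^ 3 := by
  have hpos := height_pos hμ X
  have hcomp := derivAlong_comp (V := V) (hasDerivAt_inv hpos.ne') (differentiable_height hμ X)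
  rw [derivAlong_height hμ] at hcomp
  exact hcomp.trans (by field_simp)

end Height

section HatPairing

/-- The linear function `⟨·,W⟩₍₁,₄₎` of `ℝ⁵` restricted to the hyperboloid of points `X̂`. -/
def hatPairing (μ : ℝ) (W : Fin 5 → ℝ) (X : Fin 4 → ℝ) : ℝ := form14 (hat μ X) W

variable {μ : ℝ} {V : (Fin 4 → ℝ) → Fin 4 → ℝ} {W : Fin 5 → ℝ}

lemma form14_eq_mul_sub_dotProduct (W W' : Fin 5 → ℝ) :
    form14 W W' = W 0 * W' 0 - Fin.tail W ⬝ᵥ Fin.tail W' := by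
  simp only [form14, dotProduct, Fin.sum_univ_four, Fin.tail, Fin.reduceSucc]
  ring

lemma hatPairing_eq (μ : ℝ) (W : Fin 5 → ℝ) (X : Fin 4 → ℝ) :
    hatPairing μ W X = W 0 * height μ X - X ⬝ᵥ Fin.tail W := by
  rw [hatPairing, form14_eq_mul_sub_dotProduct, hat, Fin.tail_cons, Fin.cons_zero, height, mul_comm]

lemma hatPairing_hat (μ : ℝ) (X Y : Fin 4 → ℝ) :
    hatPairing μ (hat μ Y) X = height μ Y * height μ X - X ⬝ᵥ Y := by
  rw [hatPairing_eq, hat, Fin.tail_cons, Fin.cons_zero, ← height]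

lemma form14_hat_self (hμ : μ ≠ 0) (X : Fin 4 → ℝ) : form14 (hat μ X) (hat μ X) = (μ ^ 2)⁻¹ := by
  have hpair := hatPairing_hat μ X X
  rw [hatPairing, ← sq, height_sq hμ, ← Nq_eq_dotProduct] at hpair
  linarith

lemma form14_sub_self (W W' : Fin 5 → ℝ) :
    form14 (W - W') (W - W') = form14 W W + form14 W' W' - 2 * form14 W W' := by
  simp only [form14, Pi.sub_apply]
  ring

lemma form14_hat_sub_hat (hμ : μ ≠ 0) (X Y : Fin 4 → ℝ) :
    form14 (hat μ X - hat μ Y) (hat μ X - hat μ Y) =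
      2 * (μ ^ 2)⁻¹ - 2 * hatPairing μ (hat μ Y) X := by
  rw [form14_sub_self, form14_hat_self hμ, form14_hat_self hμ, hatPairing]
  ring

lemma inv_sq_lt_hatPairing_hat (hμ : μ ≠ 0) {X Y : Fin 4 → ℝ} (hXY : X ≠ Y) :
    (μ ^ 2)⁻¹ < hatPairing μ (hat μ Y) X := by
  have ha : 0 < (μ ^ 2)⁻¹ := by positivity
  have hcauchy : (X ⬝ᵥ Y) ^ 2 ≤ Nq X * Nq Y := Finset.sum_mul_sq_le_sq_mul_sq _ _ _
  have hdist : 0 < Nq X + Nq Y - 2 * (X ⬝ᵥ Y) := by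
    have hpos := Nq_pos (sub_ne_zero.2 hXY)
    rw [Nq_eq_dotProduct, sub_dotProduct, dotProduct_sub, dotProduct_sub, dotProduct_comm Y X,
      ← Nq_eq_dotProduct, ← Nq_eq_dotProduct] at hpos
    linarith
  have hsq : ((μ ^ 2)⁻¹ + X ⬝ᵥ Y) ^ 2 < (height μ Y * height μ X) ^ 2 := by
    rw [mul_pow, height_sq hμ, height_sq hμ]
    linarith [mul_pos ha hdist]
  have hlt := lt_of_pow_lt_pow_left₀ 2 (mul_pos (height_pos hμ Y) (height_pos hμ X)).le hsq
  rw [hatPairing_hat]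
  linarith

lemma contDiff_hatPairing {n : WithTop ℕ∞} (hμ : μ ≠ 0) : ContDiff ℝ n (hatPairing μ W) := by
  simp only [funext (hatPairing_eq μ W), dotProduct]
  have := contDiff_height (n := n) hμ
  fun_prop

lemma derivAlong_hatPairing (hμ : μ ≠ 0) (X : Fin 4 → ℝ) :
    derivAlong V (hatPairing μ W) X =
      W 0 * ((X ⬝ᵥ V X) / height μ X) - V X ⬝ᵥ Fin.tail W := by
  have hdot : Differentiable ℝ fun Z : Fin 4 → ℝ => Z ⬝ᵥ Fin.tail W := by
    unfold dotProduct
    fun_prop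
  rw [funext (hatPairing_eq μ W),
    derivAlong_sub ((differentiable_height hμ X).const_mul _) (hdot X),
    derivAlong_const_mul _ (differentiable_height hμ X), derivAlong_height hμ,
    derivAlong_dotProduct_const]

lemma pd_hatPairing (hμ : μ ≠ 0) (i : Fin 4) (X : Fin 4 → ℝ) :
    pd i (hatPairing μ W) X = W 0 * (X i * (height μ X)⁻¹) - Fin.tail W i := by
  rw [pd_eq_derivAlong, derivAlong_hatPairing hμ, e4, dotProduct_single_one,
    single_one_dotProduct, div_eq_mul_inv]

lemma degOp_hatPairing (hμ : μ ≠ 0) (X : Fin 4 → ℝ) :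
    degOp (hatPairing μ W) X = hatPairing μ W X - (μ ^ 2)⁻¹ * W 0 * (height μ X)⁻¹ := by
  have hpos := height_pos hμ X
  rw [degOp_eq_derivAlong, derivAlong_hatPairing hμ, hatPairing_eq, id,
    ← Nq_eq_dotProduct, Nq_eq_height_sq_sub hμ]
  field_simp
  ring

lemma pd_pd_hatPairing (hμ : μ ≠ 0) (i : Fin 4) (X : Fin 4 → ℝ) :
    pd i (pd i (hatPairing μ W)) X = W 0 * ((height μ X)⁻¹ - X i ^ 2 / height μ X ^ 3) := by
  have hcoord : DifferentiableAt ℝ (fun Z : Fin 4 → ℝ => Z i) X := by fun_prop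
  have hinv := differentiable_inv_height hμ X
  have hpd_coord : derivAlong (fun _ => e4 i) (fun Z : Fin 4 → ℝ => Z i) X = 1 := by
    simp [derivAlong, e4, (hasFDerivAt_apply (𝕜 := ℝ) i X).fderiv]
  rw [funext (pd_hatPairing hμ i), pd_eq_derivAlong,
    derivAlong_sub ((hcoord.fun_mul hinv).const_mul _) (differentiableAt_const _),
    derivAlong_const_mul _ (hcoord.fun_mul hinv), derivAlong_mul hcoord hinv,
    derivAlong_inv_height hμ, hpd_coord, e4, dotProduct_single_one]
  simp only [derivAlong, fderiv_fun_const, Pi.zero_apply, zero_apply]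
  ring

lemma lap_hatPairing (hμ : μ ≠ 0) (X : Fin 4 → ℝ) :
    lap (hatPairing μ W) X = W 0 * (4 * (height μ X)⁻¹ - Nq X / height μ X ^ 3) := by
  simp only [lap, pd_pd_hatPairing hμ, ← Finset.mul_sum, Finset.sum_sub_distrib, ← Finset.sum_div,
    Nq]
  simp

lemma degOp_degOp_hatPairing (hμ : μ ≠ 0) (X : Fin 4 → ℝ) :
    degOp (degOp (hatPairing μ W)) X =
      degOp (hatPairing μ W) X + (μ ^ 2)⁻¹ * W 0 * (Nq X / height μ X ^ 3) := by
  have hinv := differentiable_inv_height hμ X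
  have hpair : DifferentiableAt ℝ (hatPairing μ W) X :=
    (contDiff_hatPairing hμ).differentiable one_ne_zero X
  rw [funext (degOp_hatPairing hμ), degOp_eq_derivAlong, derivAlong_sub hpair (hinv.const_mul _),
    derivAlong_const_mul _ hinv, derivAlong_inv_height hμ, id, ← Nq_eq_dotProduct,
    ← degOp_eq_derivAlong, degOp_hatPairing hμ]
  ring

lemma hypLap_hatPairing (hμ : μ ≠ 0) (X : Fin 4 → ℝ) :
    hypLap μ (hatPairing μ W) X = 4 * μ ^ 2 * hatPairing μ W X := by
  have hpos := height_pos hμ X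
  rw [hypLap, lap_hatPairing hμ, degOp_degOp_hatPairing hμ, degOp_hatPairing hμ,
    Nq_eq_height_sq_sub hμ]
  field_simp
  ring

lemma sum_sq_pd_hatPairing (hμ : μ ≠ 0) (X : Fin 4 → ℝ) :
    ∑ i, pd i (hatPairing μ W) X ^ 2 =
      (W 0 / height μ X) ^ 2 * Nq X - 2 * (W 0 / height μ X) * (X ⬝ᵥ Fin.tail W)
        + Nq (Fin.tail W) := by
  simp only [pd_hatPairing hμ, Nq, dotProduct, Finset.mul_sum, ← Finset.sum_sub_distrib,
    ← Finset.sum_add_distrib]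
  exact Finset.sum_congr rfl fun i _ => by ring

lemma hypGradSq_hatPairing (hμ : μ ≠ 0) (X : Fin 4 → ℝ) :
    hypGradSq μ (hatPairing μ W) X = μ ^ 2 * hatPairing μ W X ^ 2 - form14 W W := by
  have hpos := height_pos hμ X
  rw [hypGradSq, sum_sq_pd_hatPairing hμ, degOp_hatPairing hμ, form14_eq_mul_sub_dotProduct,
    ← Nq_eq_dotProduct, hatPairing_eq, Nq_eq_height_sq_sub hμ]
  field_simp
  ring

lemma boxTilde_comp_hatPairing (hμ : μ ≠ 0) {X : Fin 4 → ℝ} {φ φ' : ℝ → ℝ} {φ'' : ℝ}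
    (hφ : ∀ᶠ u in 𝓝 (hatPairing μ W X), HasDerivAt φ (φ' u) u)
    (hφ' : HasDerivAt φ' φ'' (hatPairing μ W X)) :
    boxTilde μ (φ ∘ hatPairing μ W) X =
      (μ ^ 2 * hatPairing μ W X ^ 2 - form14 W W) * φ''
        + 4 * μ ^ 2 * hatPairing μ W X * φ' (hatPairing μ W X)
        + 2 * μ ^ 2 * φ (hatPairing μ W X) := by
  rw [boxTilde_eq_hypLap_add, hypLap_comp μ hφ hφ' (contDiff_hatPairing hμ).contDiffAt,
    hypGradSq_hatPairing hμ, hypLap_hatPairing hμ, Function.comp_apply]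
  ring

end HatPairing

section InverseKernel

variable {μ : ℝ} {W : Fin 5 → ℝ} {X : Fin 4 → ℝ}

lemma hasDerivAt_inv_sub_two_mul {c u : ℝ} (h : c - 2 * u ≠ 0) :
    HasDerivAt (fun u => (c - 2 * u)⁻¹) (2 * (c - 2 * u)⁻¹ ^ 2) u :=
  ((((hasDerivAt_id' u).const_mul 2).const_sub c).fun_inv h).congr_deriv (by field_simp)

lemma hasDerivAt_two_mul_inv_sub_two_mul_sq {c u : ℝ} (h : c - 2 * u ≠ 0) :
    HasDerivAt (fun u => 2 * (c - 2 * u)⁻¹ ^ 2) (8 * (c - 2 * u)⁻¹ ^ 3) u :=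
  (((hasDerivAt_inv_sub_two_mul h).fun_pow 2).const_mul 2).congr_deriv (by ring)

lemma inv_sub_two_mul_satisfies_ode {m a t : ℝ} (hma : m * a = 1) (h : 2 * a - 2 * t ≠ 0) :
    (m * t ^ 2 - a) * (8 * (2 * a - 2 * t)⁻¹ ^ 3) + 4 * m * t * (2 * (2 * a - 2 * t)⁻¹ ^ 2)
      + 2 * m * (2 * a - 2 * t)⁻¹ = 0 := by
  have hg := mul_inv_cancel₀ h
  generalize (2 * a - 2 * t)⁻¹ = g at hg ⊢
  linear_combination 8 * a * g ^ 3 * hma - (4 * m * g ^ 2 * (t + a) + 2 * m * g) * hg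

lemma tdeg_inv_sub_two_mul_hatPairing (hμ : μ ≠ 0)
    (h : 2 * (μ ^ 2)⁻¹ - 2 * hatPairing μ W X ≠ 0) :
    tdeg (fun Z => (2 * (μ ^ 2)⁻¹ - 2 * hatPairing μ W Z)⁻¹) X =
      (1 - W 0 / height μ X) * (2 * (μ ^ 2)⁻¹) / (2 * (μ ^ 2)⁻¹ - 2 * hatPairing μ W X) ^ 2 := by
  have hdeg : degOp (fun Z => (2 * (μ ^ 2)⁻¹ - 2 * hatPairing μ W Z)⁻¹) X =
      2 * (2 * (μ ^ 2)⁻¹ - 2 * hatPairing μ W X)⁻¹ ^ 2 * degOp (hatPairing μ W) X := by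
    rw [degOp_eq_derivAlong]
    exact derivAlong_comp (hasDerivAt_inv_sub_two_mul h)
      ((contDiff_hatPairing hμ).differentiable one_ne_zero X)
  rw [tdeg, hdeg, degOp_hatPairing hμ]
  generalize (μ ^ 2)⁻¹ = a at *
  field_simp
  ring

lemma boxTilde_inv_sub_two_mul_hatPairing (hμ : μ ≠ 0) (hW : form14 W W = (μ ^ 2)⁻¹)
    (h : 2 * (μ ^ 2)⁻¹ - 2 * hatPairing μ W X ≠ 0) :
    boxTilde μ (fun Z => (2 * (μ ^ 2)⁻¹ - 2 * hatPairing μ W Z)⁻¹) X = 0 := by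
  have hφ : ∀ᶠ u in 𝓝 (hatPairing μ W X), HasDerivAt (fun u => (2 * (μ ^ 2)⁻¹ - 2 * u)⁻¹)
      (2 * (2 * (μ ^ 2)⁻¹ - 2 * u)⁻¹ ^ 2) u := by
    have hcont : Continuous fun u : ℝ => 2 * (μ ^ 2)⁻¹ - 2 * u := by fun_prop
    filter_upwards [hcont.continuousAt.eventually_ne h] with u hu
    exact hasDerivAt_inv_sub_two_mul hu
  have hbox := boxTilde_comp_hatPairing hμ hφ (hasDerivAt_two_mul_inv_sub_two_mul_sq h)
  rw [hW] at hbox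
  exact hbox.trans (inv_sub_two_mul_satisfies_ode (mul_inv_cancel₀ (pow_ne_zero 2 hμ)) h)

end InverseKernel

/-- For fixed `μ > 0` and `Y ∈ ℝ⁴`, the function `G(X) = 1/⟨X̂−Ŷ, X̂−Ŷ⟩₍₁,₄₎` satisfies, on
`ℝ⁴ ∖ {Y}`:
(i) `d̃eg G = (1 − √(μ⁻²+N(Y))/√(μ⁻²+N(X))) · 2μ⁻² / (⟨X̂−Ŷ, X̂−Ŷ⟩₍₁,₄₎)²`, and
(ii) `□̃_μ G = 0`. -/
theorem stmt1 (μ : ℝ) (hμ : 0 < μ) (Y : Fin 4 → ℝ)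
    (G : (Fin 4 → ℝ) → ℝ)
    (hG : ∀ X, G X = (form14 (hat μ X - hat μ Y) (hat μ X - hat μ Y))⁻¹) :
    ∀ X, X ≠ Y →
      tdeg G X =
        (1 - Real.sqrt ((μ ^ 2)⁻¹ + Nq Y) / Real.sqrt ((μ ^ 2)⁻¹ + Nq X)) * (2 * (μ ^ 2)⁻¹) /
          (form14 (hat μ X - hat μ Y) (hat μ X - hat μ Y)) ^ 2 ∧
      boxTilde μ G X = 0 := by
  intro X hXY
  have hG_eq : G = fun Z => (2 * (μ ^ 2)⁻¹ - 2 * hatPairing μ (hat μ Y) Z)⁻¹ := by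
    ext Z
    rw [hG, form14_hat_sub_hat hμ.ne']
  have hne : 2 * (μ ^ 2)⁻¹ - 2 * hatPairing μ (hat μ Y) X ≠ 0 := by
    linarith only [inv_sq_lt_hatPairing_hat hμ.ne' hXY]
  rw [form14_hat_sub_hat hμ.ne', hG_eq]
  exact ⟨tdeg_inv_sub_two_mul_hatPairing hμ.ne' hne,
    boxTilde_inv_sub_two_mul_hatPairing hμ.ne' (form14_hat_self hμ.ne' Y) hne⟩
end
end

section
/- Let p be a nonnegative integer and set l = p/2. The functions s₁(t) = (t−1)^l/(t+1)^{l+1} and s₂(t) = (t+1)^l/(t−1)^{l+1} (real powers of positive reals) each satisfy the ordinary differential equation (t²−1)·s″(t) + 4t·s′(t) − (4l(l+1)/(t²−1))·s(t) + 2·s(t) = 0 for all real t > 1. -/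
noncomputable section

/-!
Both functions solve a first-order equation `(t² − 1)·s′ = (c − t)·s`, with `c = 2l + 1` for `s₁`
and `c = −(2l + 1)` for `s₂`. Differentiating it and using it once more gives
`(t² − 1)·s″ + 4t·s′ − ((c² − 1)/(t² − 1))·s + 2·s = 0`, which depends on `c` only through
`c² − 1 = 4l(l + 1)`.
-/

open Filter Topology

lemma hasDerivAt_rpow_div_rpow {f g : ℝ → ℝ} {f' g' x : ℝ} (a b : ℝ)
    (hf : HasDerivAt f f' x) (hg : HasDerivAt g g' x) (hfx : f x ≠ 0) (hgx : 0 < g x) :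
    HasDerivAt (fun y => f y ^ a / g y ^ b)
      ((a * f' / f x - b * g' / g x) * (f x ^ a / g x ^ b)) x := by
  have hgb : g x ^ b ≠ 0 := (Real.rpow_pos_of_pos hgx b).ne'
  refine ((hf.rpow_const (.inl hfx)).fun_div (hg.rpow_const (.inl hgx.ne')) hgb).congr_deriv ?_
  rw [Real.rpow_sub_one hfx, Real.rpow_sub_one hgx.ne']
  field_simp

lemma hasDerivAt_sub_one_rpow_div_add_one_rpow (l : ℝ) {t : ℝ} (ht : 1 < t) :
    HasDerivAt (fun x : ℝ => (x - 1) ^ l / (x + 1) ^ (l + 1))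
      ((2 * l + 1 - t) / (t ^ 2 - 1) * ((t - 1) ^ l / (t + 1) ^ (l + 1))) t := by
  have hsub : t - 1 ≠ 0 := by linarith
  have hadd : 0 < t + 1 := by linarith
  have hfactor : t ^ 2 - 1 = (t - 1) * (t + 1) := by ring
  refine (hasDerivAt_rpow_div_rpow l (l + 1) ((hasDerivAt_id' t).sub_const 1)
    ((hasDerivAt_id' t).add_const 1) hsub hadd).congr_deriv ?_
  rw [hfactor, div_sub_div _ _ hsub hadd.ne']
  ring

lemma hasDerivAt_add_one_rpow_div_sub_one_rpow (l : ℝ) {t : ℝ} (ht : 1 < t) :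
    HasDerivAt (fun x : ℝ => (x + 1) ^ l / (x - 1) ^ (l + 1))
      ((-(2 * l + 1) - t) / (t ^ 2 - 1) * ((t + 1) ^ l / (t - 1) ^ (l + 1))) t := by
  have hsub : 0 < t - 1 := by linarith
  have hadd : t + 1 ≠ 0 := by linarith
  have hfactor : t ^ 2 - 1 = (t + 1) * (t - 1) := by ring
  refine (hasDerivAt_rpow_div_rpow l (l + 1) ((hasDerivAt_id' t).add_const 1)
    ((hasDerivAt_id' t).sub_const 1) hadd hsub).congr_deriv ?_
  rw [hfactor, div_sub_div _ _ hadd hsub.ne']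
  ring

lemma hasDerivAt_sub_div_sq_sub_one (c : ℝ) {t : ℝ} (ht : t ^ 2 - 1 ≠ 0) :
    HasDerivAt (fun x : ℝ => (c - x) / (x ^ 2 - 1))
      ((-1 - 2 * t * ((c - t) / (t ^ 2 - 1))) / (t ^ 2 - 1)) t := by
  have hnum : HasDerivAt (fun x : ℝ => c - x) (-1) t := (hasDerivAt_id' t).const_sub c
  have hden : HasDerivAt (fun x : ℝ => x ^ 2 - 1) (2 * t) t := by
    simpa using (hasDerivAt_pow 2 t).sub_const 1
  refine (hnum.fun_div hden ht).congr_deriv ?_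
  field_simp

lemma second_order_ode_of_eventually_hasDerivAt {s : ℝ → ℝ} {c t : ℝ} (ht : t ^ 2 - 1 ≠ 0)
    (hs : ∀ᶠ x in 𝓝 t, HasDerivAt s ((c - x) / (x ^ 2 - 1) * s x) x) :
    (t ^ 2 - 1) * deriv (deriv s) t + 4 * t * deriv s t
      - (c ^ 2 - 1) / (t ^ 2 - 1) * s t + 2 * s t = 0 := by
  have hderiv : deriv s =ᶠ[𝓝 t] fun x => (c - x) / (x ^ 2 - 1) * s x :=
    hs.mono fun x hx => hx.deriv
  have hderiv₂ := ((hasDerivAt_sub_div_sq_sub_one c ht).fun_mul hs.self_of_nhds).deriv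
  rw [hderiv.deriv_eq, hderiv₂, hderiv.eq_of_nhds]
  field_simp
  ring

theorem stmt6_general (l : ℝ) (s₁ s₂ : ℝ → ℝ)
    (hs₁ : s₁ = fun t : ℝ => (t - 1) ^ l / (t + 1) ^ (l + 1))
    (hs₂ : s₂ = fun t : ℝ => (t + 1) ^ l / (t - 1) ^ (l + 1)) :
    ∀ t : ℝ, 1 < t →
      ((t ^ 2 - 1) * deriv (deriv s₁) t + 4 * t * deriv s₁ t
          - (4 * l * (l + 1) / (t ^ 2 - 1)) * s₁ t + 2 * s₁ t = 0) ∧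
      ((t ^ 2 - 1) * deriv (deriv s₂) t + 4 * t * deriv s₂ t
          - (4 * l * (l + 1) / (t ^ 2 - 1)) * s₂ t + 2 * s₂ t = 0) := by
  subst hs₁ hs₂
  intro t ht
  have hne : t ^ 2 - 1 ≠ 0 := by nlinarith
  have hnear : ∀ᶠ x in 𝓝 t, 1 < x := eventually_gt_nhds ht
  have hc₁ : 4 * l * (l + 1) = (2 * l + 1) ^ 2 - 1 := by ring
  have hc₂ : 4 * l * (l + 1) = (-(2 * l + 1)) ^ 2 - 1 := by ring
  constructor
  · rw [hc₁]
    exact second_order_ode_of_eventually_hasDerivAt hne <|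
      hnear.mono fun _ => hasDerivAt_sub_one_rpow_div_add_one_rpow l
  · rw [hc₂]
    exact second_order_ode_of_eventually_hasDerivAt hne <|
      hnear.mono fun _ => hasDerivAt_add_one_rpow_div_sub_one_rpow l

/-- With `l = p/2` a half-integer, the functions `s₁(t) = (t−1)^l/(t+1)^{l+1}` and
`s₂(t) = (t+1)^l/(t−1)^{l+1}` both satisfy, for all `t > 1`, the ODE
`(t²−1)·s″ + 4t·s′ − (4l(l+1)/(t²−1))·s + 2·s = 0`. -/
theorem stmt6 (p : ℕ) (l : ℝ) (hl : l = (p : ℝ) / 2)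
    (s₁ s₂ : ℝ → ℝ)
    (hs₁ : s₁ = fun t : ℝ => (t - 1) ^ l / (t + 1) ^ (l + 1))
    (hs₂ : s₂ = fun t : ℝ => (t + 1) ^ l / (t - 1) ^ (l + 1)) :
    ∀ t : ℝ, 1 < t →
      ((t ^ 2 - 1) * deriv (deriv s₁) t + 4 * t * deriv s₁ t
          - (4 * l * (l + 1) / (t ^ 2 - 1)) * s₁ t + 2 * s₁ t = 0) ∧
      ((t ^ 2 - 1) * deriv (deriv s₂) t + 4 * t * deriv s₂ t
          - (4 * l * (l + 1) / (t ^ 2 - 1)) * s₂ t + 2 * s₂ t = 0) :=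
  stmt6_general l s₁ s₂ hs₁ hs₂
end
end

section
/- Let Z = (z⁰,z¹,z²,z³) ∈ ℂ⁴ satisfy Im z⁰ > √((Im z¹)² + (Im z²)² + (Im z³)²). Then the integral (1/4π) ∫_{ℝ³} exp( i( z⁰·|p⃗| + z¹p¹ + z²p² + z³p³ ) ) dp¹dp²dp³ / |p⃗| converges absolutely (where |p⃗| = √((p¹)²+(p²)²+(p³)²)) and equals 1/( (z¹)² + (z²)² + (z³)² − (z⁰)² ). -/
noncomputable section

open MeasureTheory

/-!
For a purely real spatial frequency, rotate it onto a coordinate axis of `ℝ × ℂ`. On the slice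
orthogonal to the axis at height `x`, the radial integrand is the derivative in `r` of
`exp(iζ√(x² + r²)) / (iζ)`, so the slice contributes `2πi/ζ · exp(iζ|x|)`, and what remains is the
one-dimensional Fourier transform of `exp(iζ|x|)`. For a complex frequency `φ`, the integral times
the quadratic form is holomorphic along the complex line `l ↦ Re φ + l Im φ` and constantly `4π` at
real `l`; the part of the line on which the integral converges is a strip around the real axis that
contains `l = i`, where the line passes through `φ`. In particular the quadratic form cannot vanish
there.
-/

open Complex Filter Module Set Topology

theorem exists_linearIsometryEquiv_map_eq {E F : Type*} [NormedAddCommGroup E]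
    [InnerProductSpace ℝ E] [FiniteDimensional ℝ E] [NormedAddCommGroup F]
    [InnerProductSpace ℝ F] [FiniteDimensional ℝ F] (hdim : finrank ℝ E = finrank ℝ F)
    {x : E} {y : F} (hxy : ‖x‖ = ‖y‖) : ∃ L : E ≃ₗᵢ[ℝ] F, L x = y := by
  let L : E ≃ₗᵢ[ℝ] F :=
    (stdOrthonormalBasis ℝ E).equiv (stdOrthonormalBasis ℝ F) (finCongr hdim)
  have hL : ‖L x‖ = ‖y‖ := by rw [L.norm_map, hxy]
  exact ⟨L.trans (Submodule.reflection (ℝ ∙ (L x - y))ᗮ), Submodule.reflection_sub hL⟩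

theorem eqOn_of_frequently_eq_ofReal {f g : ℂ → ℂ} {U : Set ℂ} (hU : IsOpen U)
    (hU' : IsPreconnected U) (hf : DifferentiableOn ℂ f U) (hg : DifferentiableOn ℂ g U) {t₀ : ℝ}
    (ht₀ : (t₀ : ℂ) ∈ U) (hfg : ∃ᶠ t : ℝ in 𝓝[≠] t₀, f t = g t) : EqOn f g U := by
  have ht : Tendsto ((↑) : ℝ → ℂ) (𝓝[≠] t₀) (𝓝[≠] (t₀ : ℂ)) :=
    continuous_ofReal.continuousWithinAt.tendsto_nhdsWithin fun t ht ↦ by simpa using ht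
  exact (hf.analyticOnNhd hU).eqOn_of_preconnected_of_frequently_eq (hg.analyticOnNhd hU)
    hU' ht₀ (ht.frequently hfg)

theorem integrable_norm_rpow_mul_exp_neg_mul_norm {E : Type*} [NormedAddCommGroup E]
    [NormedSpace ℝ E] [FiniteDimensional ℝ E] [Nontrivial E] [MeasurableSpace E] [BorelSpace E]
    (μ : Measure E) [μ.IsAddHaarMeasure] {s δ : ℝ} (hs : -(finrank ℝ E : ℝ) < s) (hδ : 0 < δ) :
    Integrable (fun p : E ↦ ‖p‖ ^ s * Real.exp (-δ * ‖p‖)) μ := by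
  refine (integrable_fun_norm_addHaar μ (f := fun r : ℝ ↦ r ^ s * Real.exp (-δ * r))).2 ?_
  have hs' : -1 < (finrank ℝ E - 1 : ℕ) + s := by
    rw [Nat.cast_pred finrank_pos]
    linarith
  refine (integrableOn_rpow_mul_exp_neg_mul_rpow hs' one_pos hδ).congr_fun (fun r hr ↦ ?_)
    measurableSet_Ioi
  simp only [Real.rpow_one, smul_eq_mul, Real.rpow_add hr, Real.rpow_natCast, mul_assoc]

section ConeWave

variable {E : Type*} [NormedAddCommGroup E] [NormedSpace ℝ E]

/-- The wave `exp(i(ζ|p| + φ(p)))` of complex frequency `(ζ, φ)` on the light cone over `E`, times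
the density `1/|p|` of the invariant measure of the cone; its value at the apex `p = 0` is `0`. -/
def coneWave (ζ : ℂ) (φ : E →L[ℝ] ℂ) (p : E) : ℂ :=
  exp (I * (ζ * ‖p‖ + φ p)) / ‖p‖

variable {ζ : ℂ} {φ : E →L[ℝ] ℂ}

theorem norm_coneWave_le {δ : ℝ} (h : ‖imCLM ∘L φ‖ ≤ ζ.im - δ) (p : E) :
    ‖coneWave ζ φ p‖ ≤ Real.exp (-δ * ‖p‖) / ‖p‖ := by
  have him : -(φ p).im ≤ (ζ.im - δ) * ‖p‖ :=
    calc -(φ p).im ≤ ‖(imCLM ∘L φ) p‖ := neg_le_abs _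
      _ ≤ (ζ.im - δ) * ‖p‖ := ContinuousLinearMap.le_of_opNorm_le _ h p
  rw [coneWave, norm_div, norm_real, norm_norm, norm_exp]
  gcongr
  simp only [I_mul_re, add_im, im_mul_ofReal]
  linarith

theorem norm_apply_mul_coneWave_le {δ : ℝ} (h : ‖imCLM ∘L φ‖ ≤ ζ.im - δ) (ψ : E →L[ℝ] ℂ) (p : E) :
    ‖ψ p * coneWave ζ φ p‖ ≤ ‖ψ‖ * Real.exp (-δ * ‖p‖) :=
  calc ‖ψ p * coneWave ζ φ p‖
      ≤ ‖ψ‖ * ‖p‖ * (Real.exp (-δ * ‖p‖) / ‖p‖) := by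
        rw [norm_mul]
        gcongr
        exacts [ψ.le_opNorm p, norm_coneWave_le h p]
    _ = ‖ψ‖ * Real.exp (-δ * ‖p‖) * (‖p‖ / ‖p‖) := by ring
    _ ≤ ‖ψ‖ * Real.exp (-δ * ‖p‖) := mul_le_of_le_one_right (by positivity) (div_self_le_one _)

theorem hasDerivAt_coneWave_add_smul (ζ : ℂ) (φ ψ : E →L[ℝ] ℂ) (p : E) (l : ℂ) :
    HasDerivAt (fun l : ℂ ↦ coneWave ζ (φ + l • ψ) p)
      (I * (ψ p * coneWave ζ (φ + l • ψ) p)) l := by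
  have hphase : HasDerivAt (fun l : ℂ ↦ I * (ζ * ‖p‖ + (φ p + l * ψ p))) (I * ψ p) l :=
    (((hasDerivAt_mul_const (ψ p)).const_add (φ p)).const_add (ζ * ‖p‖)).const_mul I
  convert! hphase.cexp.div_const (‖p‖ : ℂ) using 1
  rw [coneWave, add_apply, smul_apply, smul_eq_mul]
  ring

variable [MeasurableSpace E] [BorelSpace E]

theorem measurable_coneWave : Measurable (coneWave ζ φ) := by
  unfold coneWave
  fun_prop

variable [FiniteDimensional ℝ E]

theorem integrable_coneWave (μ : Measure E) [μ.IsAddHaarMeasure] (hE : 1 < finrank ℝ E)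
    (h : ‖imCLM ∘L φ‖ < ζ.im) : Integrable (coneWave ζ φ) μ := by
  have : Nontrivial E := nontrivial_of_finrank_pos (zero_lt_one.trans hE)
  have hbound := integrable_norm_rpow_mul_exp_neg_mul_norm μ (s := -1)
    (neg_lt_neg (Nat.one_lt_cast.2 hE)) (sub_pos.2 h)
  refine hbound.mono' measurable_coneWave.aestronglyMeasurable (.of_forall fun p ↦ ?_)
  rw [Real.rpow_neg_one, inv_mul_eq_div]
  exact norm_coneWave_le (sub_sub_cancel _ _).ge p

theorem differentiableAt_integral_coneWave_add_smul (μ : Measure E) [μ.IsAddHaarMeasure]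
    (hE : 1 < finrank ℝ E) {ψ : E →L[ℝ] ℂ} {l : ℂ} (h : ‖imCLM ∘L (φ + l • ψ)‖ < ζ.im) :
    DifferentiableAt ℂ (fun l : ℂ ↦ ∫ p, coneWave ζ (φ + l • ψ) p ∂μ) l := by
  have : Nontrivial E := nontrivial_of_finrank_pos (zero_lt_one.trans hE)
  obtain ⟨c, hlc, hcζ⟩ := exists_between h
  have hopen : IsOpen {l : ℂ | ‖imCLM ∘L (φ + l • ψ)‖ < c} :=
    isOpen_lt (by fun_prop) continuous_const
  have hbound : Integrable (fun p : E ↦ ‖ψ‖ * Real.exp (-(ζ.im - c) * ‖p‖)) μ := by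
    have hexp := integrable_norm_rpow_mul_exp_neg_mul_norm μ (s := 0)
      (neg_lt_zero.2 (Nat.cast_pos.2 finrank_pos)) (sub_pos.2 hcζ)
    simpa only [Real.rpow_zero, one_mul] using hexp.const_mul ‖ψ‖
  have hmeas : Measurable fun p ↦ I * (ψ p * coneWave ζ (φ + l • ψ) p) :=
    (ψ.continuous.measurable.mul measurable_coneWave).const_mul I
  have hle : ∀ p, ∀ m ∈ {l : ℂ | ‖imCLM ∘L (φ + l • ψ)‖ < c},
      ‖I * (ψ p * coneWave ζ (φ + m • ψ) p)‖ ≤ ‖ψ‖ * Real.exp (-(ζ.im - c) * ‖p‖) := by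
    intro p m hm
    rw [norm_mul, norm_I, one_mul]
    exact norm_apply_mul_coneWave_le ((le_of_lt hm).trans_eq (sub_sub_cancel _ _).symm) ψ p
  have hderiv := hasDerivAt_integral_of_dominated_loc_of_deriv_le (μ := μ)
    (F := fun l p ↦ coneWave ζ (φ + l • ψ) p)
    (F' := fun l p ↦ I * (ψ p * coneWave ζ (φ + l • ψ) p)) (hopen.mem_nhds hlc)
    (.of_forall fun l ↦ measurable_coneWave.aestronglyMeasurable) (integrable_coneWave μ hE h)
    hmeas.aestronglyMeasurable (.of_forall hle) hbound
    (.of_forall fun p m _ ↦ hasDerivAt_coneWave_add_smul ζ φ ψ p m)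
  exact hderiv.2.differentiableAt

end ConeWave

section SliceIntegral

variable {ζ : ℂ}

theorem norm_cexp_I_mul_mul_sqrt_le (hζ : 0 ≤ ζ.im) (x r : ℝ) :
    ‖exp (I * (ζ * √(x ^ 2 + r ^ 2)))‖ ≤ Real.exp (-ζ.im * r) := by
  have hr : r ≤ √(x ^ 2 + r ^ 2) := Real.le_sqrt_of_sq_le (le_add_of_nonneg_left (sq_nonneg x))
  rw [norm_exp, I_mul_re, im_mul_ofReal, neg_mul]
  gcongr

theorem hasDerivAt_cexp_I_mul_mul_sqrt (ζ : ℂ) (x : ℝ) {r : ℝ} (hr : r ≠ 0) :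
    HasDerivAt (fun r : ℝ ↦ exp (I * (ζ * √(x ^ 2 + r ^ 2))))
      (I * ζ * (r * (exp (I * (ζ * √(x ^ 2 + r ^ 2))) / √(x ^ 2 + r ^ 2)))) r := by
  have hsq : HasDerivAt (fun r : ℝ ↦ x ^ 2 + r ^ 2) (2 * r) r := by
    simpa using (hasDerivAt_pow 2 r).const_add (x ^ 2)
  have hsqrt := hsq.sqrt (by positivity)
  convert! ((hsqrt.ofReal_comp.const_mul ζ).const_mul I).cexp using 1
  push_cast
  rw [mul_div_mul_left _ _ two_ne_zero]
  ring

theorem integrableOn_Ioi_mul_cexp_sqrt_div_sqrt (hζ : 0 < ζ.im) (x : ℝ) :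
    IntegrableOn (fun r : ℝ ↦ (r : ℂ) * (exp (I * (ζ * √(x ^ 2 + r ^ 2))) / √(x ^ 2 + r ^ 2)))
      (Ioi 0) := by
  refine (exp_neg_integrableOn_Ioi 0 hζ).mono' (Measurable.aestronglyMeasurable (by fun_prop))
    ((ae_restrict_mem measurableSet_Ioi).mono fun r (hr : 0 < r) ↦ ?_)
  have hle : r ≤ √(x ^ 2 + r ^ 2) := Real.le_sqrt_of_sq_le (le_add_of_nonneg_left (sq_nonneg x))
  calc ‖(r : ℂ) * (exp (I * (ζ * √(x ^ 2 + r ^ 2))) / √(x ^ 2 + r ^ 2))‖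
      = ‖exp (I * (ζ * √(x ^ 2 + r ^ 2)))‖ * (r / √(x ^ 2 + r ^ 2)) := by
        rw [norm_mul, norm_div, Complex.norm_of_nonneg hr.le,
          Complex.norm_of_nonneg (Real.sqrt_nonneg _)]
        ring
    _ ≤ Real.exp (-ζ.im * r) * 1 := by
        gcongr
        exacts [norm_cexp_I_mul_mul_sqrt_le hζ.le x r, div_le_one_of_le₀ hle (Real.sqrt_nonneg _)]
    _ = Real.exp (-ζ.im * r) := mul_one _

theorem tendsto_cexp_I_mul_mul_sqrt_atTop (hζ : 0 < ζ.im) (x : ℝ) :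
    Tendsto (fun r : ℝ ↦ exp (I * (ζ * √(x ^ 2 + r ^ 2)))) atTop (𝓝 0) :=
  squeeze_zero_norm (norm_cexp_I_mul_mul_sqrt_le hζ.le x) <|
    Real.tendsto_exp_atBot.comp (tendsto_id.const_mul_atTop_of_neg (neg_lt_zero.2 hζ))

theorem integral_Ioi_mul_cexp_sqrt_div_sqrt (hζ : 0 < ζ.im) (x : ℝ) :
    ∫ r in Ioi (0 : ℝ), (r : ℂ) * (exp (I * (ζ * √(x ^ 2 + r ^ 2))) / √(x ^ 2 + r ^ 2)) =
      I / ζ * exp (I * (ζ * |x|)) := by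
  have hζ₀ : ζ ≠ 0 := by
    rintro rfl
    exact lt_irrefl _ hζ
  have hFTC := integral_Ioi_of_hasDerivAt_of_tendsto (a := 0)
    (by fun_prop) (fun r (hr : 0 < r) ↦ hasDerivAt_cexp_I_mul_mul_sqrt ζ x hr.ne')
    ((integrableOn_Ioi_mul_cexp_sqrt_div_sqrt hζ x).const_mul (I * ζ))
    (tendsto_cexp_I_mul_mul_sqrt_atTop hζ x)
  rw [integral_const_mul, zero_pow two_ne_zero, add_zero, Real.sqrt_sq_eq_abs, zero_sub] at hFTC
  apply mul_left_cancel₀ (mul_ne_zero I_ne_zero hζ₀)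
  rw [hFTC]
  field_simp
  rw [I_sq]

theorem integral_cexp_sqrt_norm_div_sqrt (hζ : 0 < ζ.im) (x : ℝ) :
    ∫ q : ℂ, exp (I * (ζ * √(x ^ 2 + ‖q‖ ^ 2))) / √(x ^ 2 + ‖q‖ ^ 2) =
      2 * Real.pi * I / ζ * exp (I * (ζ * |x|)) := by
  have hball : volume.real (Metric.ball (0 : ℂ) 1) = Real.pi := by
    simp [measureReal_def, volume_ball]
  rw [integral_fun_norm_addHaar volume
      (fun r : ℝ ↦ exp (I * (ζ * √(x ^ 2 + r ^ 2))) / √(x ^ 2 + r ^ 2)), hball,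
    finrank_real_complex]
  simp only [Nat.add_one_sub_one, pow_one, real_smul, nsmul_eq_mul,
    integral_Ioi_mul_cexp_sqrt_div_sqrt hζ]
  push_cast
  ring

end SliceIntegral

theorem ofReal_sq_sub_sq_ne_zero {ζ : ℂ} (hζ : ζ.im ≠ 0) (k : ℝ) : (k : ℂ) ^ 2 - ζ ^ 2 ≠ 0 := by
  rw [sq_sub_sq]
  refine mul_ne_zero (fun h ↦ hζ ?_) fun h ↦ hζ ?_ <;> simpa using congrArg im h

theorem integral_cexp_mul_cexp_abs {ζ : ℂ} (hζ : 0 < ζ.im) (k : ℝ) :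
    ∫ x : ℝ, exp (I * (k * x)) * exp (I * (ζ * |x|)) = -(2 * I * ζ) / (k ^ 2 - ζ ^ 2) := by
  have hpos : EqOn (fun x : ℝ ↦ exp (I * (k + ζ) * x))
      (fun x : ℝ ↦ exp (I * (k * x)) * exp (I * (ζ * |x|))) (Ioi 0) := by
    intro x (hx : 0 < x)
    simp only [← exp_add, abs_of_pos hx]
    ring_nf
  have hneg : EqOn (fun x : ℝ ↦ exp (I * (k - ζ) * x))
      (fun x : ℝ ↦ exp (I * (k * x)) * exp (I * (ζ * |x|))) (Iic 0) := by
    intro x (hx : x ≤ 0)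
    simp only [← exp_add, abs_of_nonpos hx, ofReal_neg]
    ring_nf
  have hre_add : (I * (k + ζ)).re < 0 := by simpa using hζ
  have hre_sub : 0 < (I * (k - ζ)).re := by simpa using hζ
  obtain ⟨hadd, hsub⟩ : (k : ℂ) + ζ ≠ 0 ∧ (k : ℂ) - ζ ≠ 0 := by
    simpa only [sq_sub_sq, mul_ne_zero_iff] using ofReal_sq_sub_sq_ne_zero hζ.ne' k
  rw [← intervalIntegral.integral_Iic_add_Ioi
      ((integrableOn_exp_mul_complex_Iic hre_sub 0).congr_fun hneg measurableSet_Iic)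
      ((integrableOn_exp_mul_complex_Ioi hre_add 0).congr_fun hpos measurableSet_Ioi),
    ← setIntegral_congr_fun measurableSet_Iic hneg, ← setIntegral_congr_fun measurableSet_Ioi hpos,
    integral_exp_mul_complex_Iic hre_sub, integral_exp_mul_complex_Ioi hre_add]
  simp only [ofReal_zero, mul_zero, exp_zero]
  rw [sq_sub_sq]
  field_simp
  rw [I_sq]
  ring

section RealFrequency

theorem integral_coneWave_comp_linearIsometryEquiv {E F : Type*} [NormedAddCommGroup E]
    [InnerProductSpace ℝ E] [FiniteDimensional ℝ E] [MeasurableSpace E] [BorelSpace E]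
    [NormedAddCommGroup F] [InnerProductSpace ℝ F] [FiniteDimensional ℝ F] [MeasurableSpace F]
    [BorelSpace F] (L : E ≃ₗᵢ[ℝ] F) (ζ : ℂ) (φ : F →L[ℝ] ℂ) :
    ∫ p, coneWave ζ (φ ∘L (L.toContinuousLinearEquiv : E →L[ℝ] F)) p =
      ∫ q, coneWave ζ φ q := by
  have hL (p : E) :
      coneWave ζ (φ ∘L (L.toContinuousLinearEquiv : E →L[ℝ] F)) p = coneWave ζ φ (L p) := by
    simp [coneWave]
  simp_rw [hL]
  exact L.measurePreserving.integral_comp L.toHomeomorph.measurableEmbedding (coneWave ζ φ)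

theorem coneWave_toLp_prod (ζ : ℂ) (k x : ℝ) (q : ℂ) :
    coneWave ζ (ofRealCLM ∘L (k • WithLp.fstL 2 ℝ ℝ ℂ)) (WithLp.toLp 2 (x, q)) =
      exp (I * (k * x)) * (exp (I * (ζ * √(x ^ 2 + ‖q‖ ^ 2))) / √(x ^ 2 + ‖q‖ ^ 2)) := by
  have hnorm : ‖WithLp.toLp 2 (x, q)‖ = √(x ^ 2 + ‖q‖ ^ 2) := by
    simp [WithLp.prod_norm_eq_of_L2]
  rw [coneWave, hnorm, ← mul_div_assoc, ← exp_add, ← mul_add, add_comm]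
  simp

theorem integral_coneWave_withLp_prod {ζ : ℂ} (hζ : 0 < ζ.im) (k : ℝ) :
    ∫ p, coneWave ζ (ofRealCLM ∘L (k • WithLp.fstL 2 ℝ ℝ ℂ)) p =
      4 * Real.pi / (k ^ 2 - ζ ^ 2) := by
  have hζ₀ : ζ ≠ 0 := by
    rintro rfl
    exact lt_irrefl _ hζ
  have hint : Integrable (coneWave ζ (ofRealCLM ∘L (k • WithLp.fstL 2 ℝ ℝ ℂ))) := by
    refine integrable_coneWave volume ?_ ?_
    · simp [(WithLp.linearEquiv 2 ℝ (ℝ × ℂ)).finrank_eq]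
    · have him : imCLM ∘L ofRealCLM ∘L (k • WithLp.fstL 2 ℝ ℝ ℂ) = 0 := by ext; simp
      rwa [him, norm_zero]
  have htoLp := WithLp.volume_preserving_toLp ℝ ℂ
  have htoLp' := (MeasurableEquiv.toLp 2 (ℝ × ℂ)).measurableEmbedding
  rw [← htoLp.integral_comp htoLp', Measure.volume_eq_prod,
    integral_prod (fun w ↦ coneWave ζ _ (WithLp.toLp 2 w))
      ((htoLp.integrable_comp_emb htoLp').2 hint)]
  simp_rw [coneWave_toLp_prod, integral_const_mul, integral_cexp_sqrt_norm_div_sqrt hζ,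
    mul_left_comm (exp _), integral_const_mul, integral_cexp_mul_cexp_abs hζ]
  field_simp
  rw [I_sq]
  ring

variable {E : Type*} [NormedAddCommGroup E] [InnerProductSpace ℝ E] [FiniteDimensional ℝ E]

theorem exists_linearIsometryEquiv_eq_smul_fstL (hE : finrank ℝ E = 3) (f : E →L[ℝ] ℝ) :
    ∃ L : E ≃ₗᵢ[ℝ] WithLp 2 (ℝ × ℂ),
      f = (‖f‖ • WithLp.fstL 2 ℝ ℝ ℂ) ∘L (L.toContinuousLinearEquiv : E →L[ℝ] _) := by
  have hdim : finrank ℝ E = finrank ℝ (WithLp 2 (ℝ × ℂ)) := by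
    simp [hE, (WithLp.linearEquiv 2 ℝ (ℝ × ℂ)).finrank_eq]
  have hnorm : ‖(InnerProductSpace.toDual ℝ E).symm f‖ =
      ‖(WithLp.toLp 2 (‖f‖, 0) : WithLp 2 (ℝ × ℂ))‖ := by
    simp
  obtain ⟨L, hL⟩ := exists_linearIsometryEquiv_map_eq hdim hnorm
  refine ⟨L, ContinuousLinearMap.ext fun p ↦ ?_⟩
  rw [← InnerProductSpace.toDual_symm_apply, ← L.inner_map_map, hL, WithLp.prod_inner_apply]
  simp [mul_comm]

variable [MeasurableSpace E] [BorelSpace E]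

theorem integral_coneWave_ofReal (hE : finrank ℝ E = 3) {ζ : ℂ} (hζ : 0 < ζ.im) (f : E →L[ℝ] ℝ) :
    ∫ p, coneWave ζ (ofRealCLM ∘L f) p = 4 * Real.pi / (‖f‖ ^ 2 - ζ ^ 2) := by
  obtain ⟨L, hL⟩ := exists_linearIsometryEquiv_eq_smul_fstL hE f
  rw [← integral_coneWave_withLp_prod hζ, ← integral_coneWave_comp_linearIsometryEquiv L,
    ContinuousLinearMap.comp_assoc, ← hL]

end RealFrequency

section ComplexLine

variable {E : Type*} [NormedAddCommGroup E] [NormedSpace ℝ E]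

/-- The complex line `l ↦ Re φ + l Im φ` in the space of complex functionals. It consists of real
functionals for real `l` and passes through `φ` at `l = i`. -/
def complexLine (φ : E →L[ℝ] ℂ) (l : ℂ) : E →L[ℝ] ℂ :=
  ofRealCLM ∘L reCLM ∘L φ + l • (ofRealCLM ∘L imCLM ∘L φ)

theorem complexLine_apply (φ : E →L[ℝ] ℂ) (l : ℂ) (p : E) :
    complexLine φ l p = (φ p).re + l * (φ p).im :=
  rfl

theorem complexLine_I (φ : E →L[ℝ] ℂ) : complexLine φ I = φ := by
  ext p
  rw [complexLine_apply, mul_comm, re_add_im]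

theorem complexLine_ofReal (φ : E →L[ℝ] ℂ) (t : ℝ) :
    complexLine φ t = ofRealCLM ∘L (reCLM ∘L φ + t • (imCLM ∘L φ)) := by
  ext p
  simp [complexLine_apply]

theorem imCLM_comp_complexLine (φ : E →L[ℝ] ℂ) (l : ℂ) :
    imCLM ∘L complexLine φ l = imCLM.smulRight (imCLM ∘L φ) l := by
  ext p
  simp [complexLine_apply]

variable [FiniteDimensional ℝ E] [MeasurableSpace E] [BorelSpace E]

theorem differentiableAt_integral_coneWave_complexLine_mul {ι : Type*} [Fintype ι]
    (μ : Measure E) [μ.IsAddHaarMeasure] (hE : 1 < finrank ℝ E) (v : ι → E) {ζ : ℂ}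
    {φ : E →L[ℝ] ℂ} {l : ℂ} (h : ‖imCLM ∘L complexLine φ l‖ < ζ.im) :
    DifferentiableAt ℂ (fun l ↦ (∫ p, coneWave ζ (complexLine φ l) p ∂μ) *
      (∑ i, complexLine φ l (v i) ^ 2 - ζ ^ 2)) l := by
  have hint : DifferentiableAt ℂ (fun l ↦ ∫ p, coneWave ζ (complexLine φ l) p ∂μ) l :=
    differentiableAt_integral_coneWave_add_smul μ hE h
  have hpoly : DifferentiableAt ℂ (fun l ↦ ∑ i, complexLine φ l (v i) ^ 2 - ζ ^ 2) l := by
    simp_rw [complexLine_apply]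
    fun_prop
  exact hint.mul hpoly

end ComplexLine

section ComplexFrequency

variable {E : Type*} [NormedAddCommGroup E] [InnerProductSpace ℝ E] [FiniteDimensional ℝ E]
  {ι : Type*} [Fintype ι]

theorem sum_sq_apply_orthonormalBasis (e : OrthonormalBasis ι ℝ E) (f : E →L[ℝ] ℝ) :
    ∑ i, f (e i) ^ 2 = ‖f‖ ^ 2 := by
  simp_rw [← InnerProductSpace.toDual_symm_apply (y := f), e.sum_sq_inner_left,
    LinearIsometryEquiv.norm_map]

variable [MeasurableSpace E] [BorelSpace E]

theorem integral_coneWave_complexLine_ofReal_mul (hE : finrank ℝ E = 3)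
    (e : OrthonormalBasis ι ℝ E) {ζ : ℂ} (hζ : 0 < ζ.im) (φ : E →L[ℝ] ℂ) (t : ℝ) :
    (∫ p, coneWave ζ (complexLine φ t) p) * (∑ i, complexLine φ t (e i) ^ 2 - ζ ^ 2) =
      4 * Real.pi := by
  rw [complexLine_ofReal, integral_coneWave_ofReal hE hζ]
  set f : E →L[ℝ] ℝ := reCLM ∘L φ + t • (imCLM ∘L φ)
  have hsum : ∑ i, (ofRealCLM ∘L f) (e i) ^ 2 = (‖f‖ : ℂ) ^ 2 := by
    simp only [ContinuousLinearMap.comp_apply, ofRealCLM_apply]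
    exact_mod_cast congrArg ofReal (sum_sq_apply_orthonormalBasis e f)
  rw [hsum, div_mul_cancel₀ _ (ofReal_sq_sub_sq_ne_zero hζ.ne' ‖f‖)]

theorem integral_coneWave_mul (hE : finrank ℝ E = 3) (e : OrthonormalBasis ι ℝ E) {ζ : ℂ}
    {φ : E →L[ℝ] ℂ} (h : ‖imCLM ∘L φ‖ < ζ.im) :
    (∫ p, coneWave ζ φ p) * (∑ i, φ (e i) ^ 2 - ζ ^ 2) = 4 * Real.pi := by
  have hζ : 0 < ζ.im := (norm_nonneg _).trans_lt h
  let T : ℂ →L[ℝ] E →L[ℝ] ℝ := imCLM.smulRight (imCLM ∘L φ)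
  let U : Set ℂ := T ⁻¹' Metric.ball 0 ζ.im
  have hmem {l : ℂ} : l ∈ U ↔ ‖imCLM ∘L complexLine φ l‖ < ζ.im := by
    rw [imCLM_comp_complexLine]
    exact mem_ball_zero_iff
  have hU : IsOpen U := Metric.isOpen_ball.preimage T.continuous
  have hU' : IsPreconnected U := ((convex_ball 0 ζ.im).linear_preimage T.toLinearMap).isPreconnected
  have hconst : EqOn (fun l ↦ (∫ p, coneWave ζ (complexLine φ l) p) *
      (∑ i, complexLine φ l (e i) ^ 2 - ζ ^ 2)) (fun _ ↦ 4 * Real.pi) U :=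
    eqOn_of_frequently_eq_ofReal (t₀ := 0) hU hU'
      (fun l hl ↦ (differentiableAt_integral_coneWave_complexLine_mul volume (by omega) e
        (hmem.1 hl)).differentiableWithinAt)
      (differentiableOn_const _) (by simpa [U, T] using hζ)
      (Frequently.of_forall (integral_coneWave_complexLine_ofReal_mul hE e hζ φ))
  have hI : I ∈ U := hmem.2 (by rwa [complexLine_I])
  simpa only [complexLine_I] using hconst hI

theorem integral_coneWave (hE : finrank ℝ E = 3) (e : OrthonormalBasis ι ℝ E) {ζ : ℂ}
    {φ : E →L[ℝ] ℂ} (h : ‖imCLM ∘L φ‖ < ζ.im) :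
    ∫ p, coneWave ζ φ p = 4 * Real.pi / (∑ i, φ (e i) ^ 2 - ζ ^ 2) := by
  have hmul := integral_coneWave_mul hE e h
  have hne : ∑ i, φ (e i) ^ 2 - ζ ^ 2 ≠ 0 := by
    intro h₀
    simp [h₀, Real.pi_ne_zero, eq_comm] at hmul
  exact eq_div_of_mul_eq hne hmul

end ComplexFrequency

section Coordinates

variable {ι : Type*} [Fintype ι]

/-- The bilinear pairing `p ↦ ∑ i, wᵢ pᵢ` of a complex frequency `w` with real momenta `p`. -/
def momentumPairing (w : ι → ℂ) : EuclideanSpace ℝ ι →L[ℝ] ℂ :=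
  ∑ i, w i • (ofRealCLM ∘L EuclideanSpace.proj i)

theorem momentumPairing_apply (w : ι → ℂ) (p : EuclideanSpace ℝ ι) :
    momentumPairing w p = ∑ i, w i * p i := by
  simp [momentumPairing]

theorem momentumPairing_basisFun (w : ι → ℂ) (i : ι) :
    momentumPairing w (EuclideanSpace.basisFun ι ℝ i) = w i := by
  classical
  simp [momentumPairing_apply, apply_ite]

theorem norm_imCLM_comp_momentumPairing (w : ι → ℂ) :
    ‖imCLM ∘L momentumPairing w‖ = √(∑ i, (w i).im ^ 2) := by
  rw [eq_comm, Real.sqrt_eq_iff_eq_sq (by positivity) (norm_nonneg _),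
    ← sum_sq_apply_orthonormalBasis (EuclideanSpace.basisFun ι ℝ)]
  simp only [ContinuousLinearMap.comp_apply, momentumPairing_basisFun, imCLM_apply]

end Coordinates

/-- If `Z = (z⁰,z¹,z²,z³) ∈ ℂ⁴` satisfies `Im z⁰ > √((Im z¹)² + (Im z²)² + (Im z³)²)`, then
`(1/4π) ∫_{ℝ³} exp(i(z⁰|p⃗| + z¹p¹ + z²p² + z³p³)) d³p/|p⃗|` converges absolutely and equals
`1/((z¹)² + (z²)² + (z³)² − (z⁰)²)`. -/
theorem stmt14 (z : Fin 4 → ℂ)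
    (hz : Real.sqrt ((z 1).im ^ 2 + (z 2).im ^ 2 + (z 3).im ^ 2) < (z 0).im) :
    Integrable (fun p : EuclideanSpace ℝ (Fin 3) =>
      Complex.exp (Complex.I *
        (z 0 * (‖p‖ : ℂ) + z 1 * (p 0 : ℂ) + z 2 * (p 1 : ℂ) + z 3 * (p 2 : ℂ))) /
        (‖p‖ : ℂ)) ∧
    (1 / (4 * (Real.pi : ℂ))) *
      ∫ p : EuclideanSpace ℝ (Fin 3),
        Complex.exp (Complex.I *
          (z 0 * (‖p‖ : ℂ) + z 1 * (p 0 : ℂ) + z 2 * (p 1 : ℂ) + z 3 * (p 2 : ℂ))) /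
          (‖p‖ : ℂ)
      = 1 / ((z 1) ^ 2 + (z 2) ^ 2 + (z 3) ^ 2 - (z 0) ^ 2) := by
  have hwave : (fun p : EuclideanSpace ℝ (Fin 3) ↦
      exp (I * (z 0 * ‖p‖ + z 1 * p 0 + z 2 * p 1 + z 3 * p 2)) / ‖p‖) =
      coneWave (z 0) (momentumPairing ![z 1, z 2, z 3]) := by
    ext p
    simp [coneWave, momentumPairing_apply, Fin.sum_univ_three, add_assoc]
  have htube : ‖imCLM ∘L momentumPairing ![z 1, z 2, z 3]‖ < (z 0).im := by
    simpa [norm_imCLM_comp_momentumPairing, Fin.sum_univ_three] using hz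
  rw [hwave]
  refine ⟨integrable_coneWave volume (by simp) htube, ?_⟩
  have hpi : 4 * (Real.pi : ℂ) ≠ 0 := by simp [Real.pi_ne_zero]
  rw [integral_coneWave (by simp) (EuclideanSpace.basisFun (Fin 3) ℝ) htube, ← mul_div_assoc,
    one_div_mul_cancel hpi]
  simp only [momentumPairing_basisFun, Fin.sum_univ_three]
  rfl
end
end

section
/- Let φ₁, φ₂ ∈ ℂ[z⁰,z¹,z²,z³] be harmonic polynomials (□φᵢ = 0), let R₁, R₂ > 0, and let W ∈ ℂ⁴ be such that Rᵢ²·1 − Z(W)Z(W)* is positive definite for i = 1,2. Then (1/(2π²)²) ∫_{S³_{R₁}} ∫_{S³_{R₂}} (d̃eg φ₁)(X₁) · (d̃eg φ₂)(X₂) / ( N(W−X₁) · N(W−X₂) ) dS(X₂) dS(X₁) / (R₁R₂) = φ₁(W)·φ₂(W), where N(W−X) = Σᵢ(wⁱ−xⁱ)² ∈ ℂ. -/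
noncomputable section

open MeasureTheory MvPolynomial Matrix
open scoped ComplexOrder

/-- Euclidean 4-space. -/
abbrev E4 := EuclideanSpace ℝ (Fin 4)

/-- `N(V) = Σᵢ (vⁱ)²` for `V ∈ ℂ⁴`. -/
def NC (V : Fin 4 → ℂ) : ℂ := ∑ i, V i ^ 2

/-- The matrix `Z(V) = [[v⁰−iv³, −iv¹−v²],[−iv¹+v², v⁰+iv³]]` with `det Z(V) = N(V)`. -/
def Zmat (V : Fin 4 → ℂ) : Matrix (Fin 2) (Fin 2) ℂ :=
  !![V 0 - Complex.I * V 3, -Complex.I * V 1 - V 2;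
     -Complex.I * V 1 + V 2, V 0 + Complex.I * V 3]

/-- The Laplacian `□f = Σᵢ ∂²f/∂(zⁱ)²` of a polynomial. -/
def lapP (f : MvPolynomial (Fin 4) ℂ) : MvPolynomial (Fin 4) ℂ :=
  ∑ i, pderiv i (pderiv i f)

/-- `d̃eg f = f + Σᵢ zⁱ ∂f/∂zⁱ` as a polynomial. -/
def tdegP (f : MvPolynomial (Fin 4) ℂ) : MvPolynomial (Fin 4) ℂ :=
  f + ∑ i, X i * pderiv i f

/-- Evaluation of a polynomial in `z⁰,…,z³` at a real point `X ∈ ℝ⁴ ⊂ ℂ⁴`. -/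
def evalR (f : MvPolynomial (Fin 4) ℂ) (x : E4) : ℂ :=
  eval (fun i => ((x i : ℝ) : ℂ)) f

/-- Integral of `g` over the sphere `S³_R ⊂ ℝ⁴` of radius `R` centered at the origin with
respect to the (non-normalized) Euclidean surface measure `dS`, of total mass `2π²R³`:
it is `R³` times the integral over the unit sphere with its Euclidean surface measure. -/
def sphereInt (R : ℝ) (g : E4 → ℂ) : ℂ :=
  (R ^ 3 : ℝ) • ∫ ω : Metric.sphere (0 : E4) 1,
    g (R • (ω : E4)) ∂(volume : Measure E4).toSphere

/-!
The double integral factors, so it suffices to prove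
`∫_{S³_R} (d̃eg φ)(X) / N(W - X) dS = 2π² R φ(W)` for one harmonic polynomial `φ`. By linearity and
scaling, take `φ` homogeneous of degree `m` and `R = 1`. Write `N(W - z X) = (z - a)(z - b)`: the
roots `a`, `b` are eigenvalues of `Z(W) Z(X)⁻¹`, and `Z(X)` is unitary for `X ∈ S³`, so
`|a|, |b| ≤ ‖Z(W)‖ < 1`. Hence `1 / N(W - X)` is the sum over `n` of `∑ i ≤ n, aⁱ bⁿ⁻ⁱ`, whose terms
are bounded by `(n + 1) ‖Z(W)‖ⁿ`. On the sphere the `n`-th term is a polynomial in `X` that is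
homogeneous of degree `n` and, in dimension four, harmonic. So only `n = m` pairs nontrivially with
`φ`, and an induction on `m` via integration by parts on the sphere shows that this pairing is
`2π² φ(W) / (m + 1)`.
-/

section OperatorNorm

open scoped Matrix.Norms.L2Operator MatrixOrder

variable {n : Type*} [Fintype n] [DecidableEq n]

lemma l2_opNorm_lt_of_posDef_sub_mul_conjTranspose [Nonempty n] {A : Matrix n n ℂ} {r : ℝ}
    (hr : 0 < r) (hA : (((r ^ 2 : ℝ) : ℂ) • (1 : Matrix n n ℂ) - A * Aᴴ).PosDef) : ‖A‖ < r := by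
  have norm_mem : ‖A * Aᴴ‖ ∈ spectrum ℝ (A * Aᴴ) :=
    CStarAlgebra.norm_mem_spectrum_of_nonneg (posSemidef_self_mul_conjTranspose A).nonneg
  have gap_mem : r ^ 2 - ‖A * Aᴴ‖ ∈ spectrum ℝ (algebraMap ℝ (Matrix n n ℂ) (r ^ 2) - A * Aᴴ) := by
    rw [← spectrum.singleton_sub_eq]
    exact Set.sub_mem_sub rfl norm_mem
  have gap_pos : 0 < r ^ 2 - ‖A * Aᴴ‖ := by
    refine hA.isStrictlyPositive.spectrum_pos (𝕜 := ℝ) ?_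
    rwa [Complex.coe_smul, ← Algebra.algebraMap_eq_smul_one]
  rw [← star_eq_conjTranspose, CStarRing.norm_self_mul_star, ← sq] at gap_pos
  exact lt_of_pow_lt_pow_left₀ 2 hr.le (by linarith)

lemma norm_le_l2_opNorm_of_det_sub_smul_unitary_eq_zero {A U : Matrix n n ℂ}
    (hU : U ∈ unitary (Matrix n n ℂ)) {z : ℂ} (hz : (A - z • U).det = 0) : ‖z‖ ≤ ‖A‖ := by
  cases isEmpty_or_nonempty n
  · simp at hz
  have eigenvalue : z ∈ spectrum ℂ (A * star U) := by
    rw [spectrum.mem_iff, Matrix.isUnit_iff_isUnit_det, Algebra.algebraMap_eq_smul_one]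
    have factor : z • 1 - A * star U = -((A - z • U) * star U) := by
      rw [sub_mul, smul_mul_assoc, Unitary.mul_star_self_of_mem hU, neg_sub]
    simp [factor, det_neg, hz]
  calc ‖z‖ ≤ ‖A * star U‖ := spectrum.norm_le_norm_of_mem eigenvalue
    _ = ‖A‖ := CStarRing.norm_mul_mem_unitary A (Unitary.star_mem hU)

lemma Zmat_sub (V V' : Fin 4 → ℂ) : Zmat (V - V') = Zmat V - Zmat V' := by
  ext i j; fin_cases i <;> fin_cases j <;> simp [Zmat] <;> ring

lemma Zmat_smul (c : ℂ) (V : Fin 4 → ℂ) : Zmat (c • V) = c • Zmat V := by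
  ext i j; fin_cases i <;> fin_cases j <;> simp [Zmat] <;> ring

lemma det_Zmat (V : Fin 4 → ℂ) : (Zmat V).det = NC V := by
  simp only [Zmat, NC, det_fin_two_of, Fin.sum_univ_four]
  linear_combination (-V 1 ^ 2 - V 3 ^ 2) * Complex.I_sq

lemma Zmat_ofReal_mul_star (x : Fin 4 → ℝ) :
    Zmat (fun i => (x i : ℂ)) * star (Zmat fun i => (x i : ℂ)) =
      NC (fun i => (x i : ℂ)) • (1 : Matrix (Fin 2) (Fin 2) ℂ) := by
  ext i j
  fin_cases i <;> fin_cases j <;>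
    simp [Zmat, NC, Matrix.mul_apply, star_apply, Fin.sum_univ_four] <;>
    grind [Complex.I_sq]

lemma NC_ofReal_of_mem_sphere (ω : Metric.sphere (0 : E4) 1) :
    NC (fun i => ((ω : E4) i : ℂ)) = 1 := by
  have h := EuclideanSpace.real_norm_sq_eq (ω : E4)
  rw [norm_eq_of_mem_sphere, one_pow] at h
  simp only [NC]
  exact_mod_cast h.symm

lemma Zmat_mem_unitary (ω : Metric.sphere (0 : E4) 1) :
    Zmat (fun i => ((ω : E4) i : ℂ)) ∈ unitary (Matrix (Fin 2) (Fin 2) ℂ) := by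
  have hmul : Zmat (fun i => ((ω : E4) i : ℂ)) * star (Zmat fun i => ((ω : E4) i : ℂ)) = 1 := by
    rw [Zmat_ofReal_mul_star, NC_ofReal_of_mem_sphere, one_smul]
  exact Unitary.mem_iff.2 ⟨mul_eq_one_comm.1 hmul, hmul⟩

lemma norm_le_l2_opNorm_Zmat_of_NC_sub_smul_eq_zero {V : Fin 4 → ℂ}
    (ω : Metric.sphere (0 : E4) 1) {z : ℂ} (hz : NC (V - z • fun i => ((ω : E4) i : ℂ)) = 0) :
    ‖z‖ ≤ ‖Zmat V‖ := by
  rw [← det_Zmat, Zmat_sub, Zmat_smul] at hz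
  exact norm_le_l2_opNorm_of_det_sub_smul_unitary_eq_zero (Zmat_mem_unitary ω) hz

end OperatorNorm

section Dickson

open Polynomial (dickson)

lemma eval_dickson_two_eq_sum {K : Type*} [CommRing K] (a b : K) (n : ℕ) :
    (dickson 2 (a * b) n).eval (a + b) = ∑ i ∈ Finset.range (n + 1), a ^ i * b ^ (n - i) := by
  have sum_succ (m : ℕ) : ∑ i ∈ Finset.range (m + 2), a ^ i * b ^ (m + 1 - i) =
      a ^ (m + 1) + b * ∑ i ∈ Finset.range (m + 1), a ^ i * b ^ (m - i) :=
    geom_sum₂_succ_eq a b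
  induction n using Nat.twoStepInduction with
  | zero => norm_num
  | one => simp [Finset.sum_range_succ, add_comm]
  | more n ih ih_succ =>
    rw [Polynomial.dickson_add_two, Polynomial.eval_sub, Polynomial.eval_mul, Polynomial.eval_mul,
      Polynomial.eval_X, Polynomial.eval_C, ih, ih_succ, sum_succ (n + 1), sum_succ n]
    ring

lemma norm_eval_dickson_two_le {K : Type*} [NormedField K] {a b : K} {ρ : ℝ}
    (ha : ‖a‖ ≤ ρ) (hb : ‖b‖ ≤ ρ) (n : ℕ) :
    ‖(dickson 2 (a * b) n).eval (a + b)‖ ≤ (n + 1) * ρ ^ n := by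
  have hρ : 0 ≤ ρ := (norm_nonneg a).trans ha
  rw [eval_dickson_two_eq_sum]
  refine (norm_sum_le_of_le _ (f := fun i => a ^ i * b ^ (n - i)) fun i hi => ?_).trans_eq
    (b := ∑ _i ∈ Finset.range (n + 1), ρ ^ n) (by simp)
  calc ‖a ^ i * b ^ (n - i)‖ = ‖a‖ ^ i * ‖b‖ ^ (n - i) := by rw [norm_mul, norm_pow, norm_pow]
    _ ≤ ρ ^ i * ρ ^ (n - i) := by gcongr
    _ = ρ ^ n := by rw [← pow_add, Nat.add_sub_cancel' (Finset.mem_range_succ_iff.1 hi)]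

lemma hasSum_eval_dickson_two {K : Type*} [NormedField K] [CompleteSpace K] {a b : K}
    (ha : ‖a‖ < 1) (hb : ‖b‖ < 1) :
    HasSum (fun n => (dickson 2 (a * b) n).eval (a + b)) ((1 - a) * (1 - b))⁻¹ := by
  simp only [eval_dickson_two_eq_sum]
  rw [mul_inv, ← tsum_geometric_of_norm_lt_one ha, ← tsum_geometric_of_norm_lt_one hb]
  exact hasSum_sum_range_mul_of_summable_norm (summable_norm_geometric_of_norm_lt_one ha)
    (summable_norm_geometric_of_norm_lt_one hb)

lemma derivation_eval_dickson_two {K A : Type*} [CommRing K] [CommRing A] [Algebra K A]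
    (D : Derivation K A A) {s q ν : A} (hs : D s = 2 * ν) (hq : D q = ν * s) (n : ℕ) :
    D ((dickson 2 q (n + 1)).eval s) = (n + 2) * ν * (dickson 2 q n).eval s := by
  have dickson_zero_eq_one : dickson 2 q 0 = 1 := by norm_num
  have D_succ (m : ℕ) : D ((dickson 2 q (m + 2)).eval s) =
      s * D ((dickson 2 q (m + 1)).eval s) + 2 * ν * (dickson 2 q (m + 1)).eval s
        - q * D ((dickson 2 q m).eval s) - ν * s * (dickson 2 q m).eval s := by
    simp only [Polynomial.dickson_add_two, Polynomial.eval_sub, Polynomial.eval_mul,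
      Polynomial.eval_X, Polynomial.eval_C, map_sub, Derivation.leibniz, smul_eq_mul, hs, hq]
    ring
  induction n using Nat.twoStepInduction with
  | zero => simp [dickson_zero_eq_one, hs]
  | one =>
    rw [D_succ]
    simp only [dickson_zero_eq_one, zero_add, Polynomial.dickson_one, Polynomial.eval_X,
      Polynomial.eval_one, Derivation.map_one_eq_zero, hs]
    push_cast
    ring
  | more n ih ih_succ =>
    rw [D_succ, ih, ih_succ, Polynomial.dickson_add_two 2 q n]
    simp only [Polynomial.eval_sub, Polynomial.eval_mul, Polynomial.eval_X, Polynomial.eval_C]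
    push_cast
    ring

end Dickson

section PolynomialAlgebra

variable {ι K : Type*} [CommRing K]

lemma pderiv_comm (i j : ι) (p : MvPolynomial ι K) :
    pderiv i (pderiv j p) = pderiv j (pderiv i p) := by
  classical
  have bracket_eq_zero : ⁅(pderiv i : Derivation K (MvPolynomial ι K) (MvPolynomial ι K)),
      (pderiv j : Derivation K (MvPolynomial ι K) (MvPolynomial ι K))⁆ = 0 :=
    MvPolynomial.derivation_ext fun k => by
      simp [Derivation.commutator_apply, pderiv_X, Pi.single_apply, apply_ite]
  have := DFunLike.congr_fun bracket_eq_zero p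
  rwa [Derivation.commutator_apply, Derivation.zero_apply, sub_eq_zero] at this

lemma eval_smul_of_isHomogeneous {p : MvPolynomial ι K} {k : ℕ} (hp : p.IsHomogeneous k)
    (c : K) (v : ι → K) : eval (c • v) p = c ^ k * eval v p := by
  simp only [eval_eq, Finset.mul_sum]
  refine Finset.sum_congr rfl fun a ha => ?_
  simp only [Pi.smul_apply, smul_eq_mul, mul_pow, Finset.prod_mul_distrib,
    Finset.prod_pow_eq_pow_sum, hp.degree_eq_sum_deg_support ha]
  ring

lemma pderiv_eq_zero_of_isHomogeneous_zero {p : MvPolynomial ι K} (hp : p.IsHomogeneous 0)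
    (i : ι) : pderiv i p = 0 := by
  rw [totalDegree_eq_zero_iff_eq_C.1 ((totalDegree_zero_iff_isHomogeneous ι).2 hp), pderiv_C]

lemma isHomogeneous_mul_pderiv {p q : MvPolynomial ι K} {k l : ℕ} (hp : p.IsHomogeneous k)
    (hq : q.IsHomogeneous l) (i : ι) : (p * pderiv i q).IsHomogeneous (k + l - 1) := by
  obtain _ | l := l
  · rw [pderiv_eq_zero_of_isHomogeneous_zero hq, mul_zero]
    exact isHomogeneous_zero _ _ _
  · exact hp.mul hq.pderiv

variable [Fintype ι]

/-- The Laplacian `∑ i, ∂ᵢ²` on polynomials; `lapP` is the case of four complex variables. -/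
def laplacian : MvPolynomial ι K →ₗ[K] MvPolynomial ι K :=
  ∑ i, (pderiv i).toLinearMap ∘ₗ (pderiv i).toLinearMap

lemma laplacian_apply (p : MvPolynomial ι K) : laplacian p = ∑ i, pderiv i (pderiv i p) := by
  simp [laplacian]

/-- The squared distance to the origin, `∑ i, Xᵢ²`. -/
def radiusSq (ι K : Type*) [CommRing K] [Fintype ι] : MvPolynomial ι K := ∑ i, X i ^ 2

/-- The linear form `∑ i, wᵢ Xᵢ`. -/
def linearForm (w : ι → K) : MvPolynomial ι K := ∑ i, C (w i) * X i

/-- The derivative in the direction `w`. -/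
def dirDeriv (w : ι → K) : Derivation K (MvPolynomial ι K) (MvPolynomial ι K) :=
  ∑ i, w i • pderiv i

lemma dirDeriv_apply (w : ι → K) (p : MvPolynomial ι K) :
    dirDeriv w p = ∑ i, w i • pderiv i p := by
  have coe_sum := map_sum (Derivation.coeFnAddMonoidHom (R := K) (A := MvPolynomial ι K)
    (M := MvPolynomial ι K)) (fun i => w i • pderiv i) Finset.univ
  exact (congrFun coe_sum p).trans (Finset.sum_apply _ _ _)

lemma pderiv_radiusSq (i : ι) : pderiv i (radiusSq ι K) = 2 * X i := by
  classical
  simp [radiusSq, pderiv_X, Pi.single_apply]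

lemma pderiv_linearForm (w : ι → K) (i : ι) : pderiv i (linearForm w) = C (w i) := by
  classical
  simp [linearForm, pderiv_X, Pi.single_apply]

lemma isHomogeneous_radiusSq : (radiusSq ι K).IsHomogeneous 2 :=
  IsHomogeneous.sum _ _ _ fun i _ => isHomogeneous_X_pow i 2

lemma isHomogeneous_linearForm (w : ι → K) : (linearForm w).IsHomogeneous 1 :=
  IsHomogeneous.sum _ _ _ fun i _ => isHomogeneous_C_mul_X (w i) i

lemma isHomogeneous_dirDeriv (w : ι → K) {p : MvPolynomial ι K} {k : ℕ}
    (hp : p.IsHomogeneous (k + 1)) : (dirDeriv w p).IsHomogeneous k := by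
  rw [dirDeriv_apply]
  exact IsHomogeneous.sum _ _ _ fun i _ => by
    rw [smul_eq_C_mul]
    exact hp.pderiv.C_mul (w i)

lemma eval_dirDeriv_self {p : MvPolynomial ι K} {k : ℕ} (hp : p.IsHomogeneous k) (w : ι → K) :
    eval w (dirDeriv w p) = k * eval w p := by
  simpa [dirDeriv_apply, smul_eval] using congrArg (eval w) hp.sum_X_mul_pderiv

lemma laplacian_mul (p q : MvPolynomial ι K) :
    laplacian (p * q) =
      p * laplacian q + q * laplacian p + 2 * ∑ i, pderiv i p * pderiv i q := by
  simp only [laplacian_apply, Finset.mul_sum, ← Finset.sum_add_distrib]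
  refine Finset.sum_congr rfl fun i _ => ?_
  simp only [Derivation.leibniz, smul_eq_mul, map_add]
  ring

lemma laplacian_dirDeriv (w : ι → K) (p : MvPolynomial ι K) :
    laplacian (dirDeriv w p) = dirDeriv w (laplacian p) := by
  simp only [laplacian_apply, dirDeriv_apply, map_sum, Derivation.map_smul]
  rw [Finset.sum_comm]
  refine Finset.sum_congr rfl fun i _ => Finset.sum_congr rfl fun j _ => ?_
  rw [pderiv_comm i j p, pderiv_comm i j]

lemma laplacian_linearForm_mul (w : ι → K) (p : MvPolynomial ι K) :
    laplacian (linearForm w * p) = linearForm w * laplacian p + 2 * dirDeriv w p := by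
  have harmonic : laplacian (linearForm w) = 0 := by
    simp [laplacian_apply, pderiv_linearForm]
  simp only [laplacian_mul, harmonic, pderiv_linearForm, dirDeriv_apply, smul_eq_C_mul,
    mul_zero, add_zero]

lemma laplacian_radiusSq_mul {p : MvPolynomial ι K} {k : ℕ} (hp : p.IsHomogeneous k) :
    laplacian (radiusSq ι K * p) =
      radiusSq ι K * laplacian p + (2 * Fintype.card ι + 4 * k) * p := by
  have laplacian_radiusSq : laplacian (radiusSq ι K) = 2 * Fintype.card ι := by
    simp [laplacian_apply, pderiv_radiusSq, ← map_ofNat C 2, mul_comm]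
  have euler : ∑ i, pderiv i (radiusSq ι K) * pderiv i p = 2 * (k * p) := by
    rw [← nsmul_eq_mul, ← hp.sum_X_mul_pderiv, Finset.mul_sum]
    simp only [pderiv_radiusSq, mul_assoc]
  rw [laplacian_mul, laplacian_radiusSq, euler]
  ring

lemma laplacian_homogeneousComponent {p : MvPolynomial ι K} (hp : laplacian p = 0) (k : ℕ) :
    laplacian (homogeneousComponent k p) = 0 := by
  ext a
  have hpa := congrArg (coeff a) hp
  simp only [laplacian_apply, coeff_sum, coeff_pderiv, coeff_homogeneousComponent, coeff_zero,
    map_add, Finsupp.degree_single] at hpa ⊢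
  by_cases ha : a.degree + 1 + 1 = k
  · simpa only [if_pos ha] using hpa
  · simp only [if_neg ha, zero_mul, Finset.sum_const_zero]

/-- The zonal polynomial `∑ i ≤ n, aⁱ bⁿ⁻ⁱ`, where `a + b = 2⟨w, x⟩` and `a b = N(w) N(x)`,
written through a Dickson polynomial to avoid the radicals in `a` and `b`. In other words it is
`|w|ⁿ |x|ⁿ` times the Chebyshev polynomial `Uₙ` of the cosine of the angle between `w` and `x`. On
`N(x) = 1` these polynomials are the terms of the expansion of `1 / N(w - x)`. -/
def zonal (w : ι → K) (n : ℕ) : MvPolynomial ι K :=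
  (Polynomial.dickson 2 (C (∑ i, w i ^ 2) * radiusSq ι K) n).eval (2 * linearForm w)

lemma zonal_zero (w : ι → K) : zonal w 0 = 1 := by
  simp only [zonal, Polynomial.dickson_zero]
  norm_num

lemma zonal_one (w : ι → K) : zonal w 1 = 2 * linearForm w := by
  simp [zonal]

lemma zonal_add_two (w : ι → K) (n : ℕ) :
    zonal w (n + 2) =
      2 * linearForm w * zonal w (n + 1) - C (∑ i, w i ^ 2) * radiusSq ι K * zonal w n := by
  simp only [zonal, Polynomial.dickson_add_two, Polynomial.eval_sub, Polynomial.eval_mul,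
    Polynomial.eval_X, Polynomial.eval_C]

lemma dirDeriv_zonal_succ (w : ι → K) (n : ℕ) :
    dirDeriv w (zonal w (n + 1)) = ((n : MvPolynomial ι K) + 2) * C (∑ i, w i ^ 2) * zonal w n := by
  have on_linearForm : dirDeriv w (linearForm w) = C (∑ i, w i ^ 2) := by
    simp [dirDeriv_apply, pderiv_linearForm, smul_eq_C_mul, sq]
  have on_radiusSq : dirDeriv w (radiusSq ι K) = 2 * linearForm w := by
    simp only [dirDeriv_apply, pderiv_radiusSq, smul_eq_C_mul, linearForm, Finset.mul_sum]
    exact Finset.sum_congr rfl fun i _ => mul_left_comm _ _ _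
  refine derivation_eval_dickson_two (dirDeriv w) ?_ ?_ n
  · rw [← map_ofNat C 2, ← smul_eq_C_mul, Derivation.map_smul, on_linearForm, smul_eq_C_mul]
  · rw [← smul_eq_C_mul, Derivation.map_smul, on_radiusSq, smul_eq_C_mul]

lemma isHomogeneous_zonal (w : ι → K) (n : ℕ) : (zonal w n).IsHomogeneous n := by
  have two_linearForm : (2 * linearForm w).IsHomogeneous 1 := by
    simpa only [map_ofNat] using (isHomogeneous_linearForm w).C_mul 2
  induction n using Nat.twoStepInduction with
  | zero => simpa only [zonal_zero] using isHomogeneous_one ι K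
  | one => simpa only [zonal_one] using two_linearForm
  | more n ih ih_succ =>
    rw [zonal_add_two]
    have h₁ := two_linearForm.mul ih_succ
    have h₂ := (isHomogeneous_radiusSq.C_mul (∑ i, w i ^ 2)).mul ih
    rw [show 1 + (n + 1) = n + 2 by ring] at h₁
    rw [add_comm 2 n] at h₂
    exact h₁.sub h₂

-- Only in dimension four do the two error terms in the recursion cancel.
lemma laplacian_zonal (hι : Fintype.card ι = 4) (w : ι → K) (n : ℕ) :
    laplacian (zonal w n) = 0 := by
  have laplacian_one : laplacian (1 : MvPolynomial ι K) = 0 := by simp [laplacian_apply]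
  induction n using Nat.twoStepInduction with
  | zero => rw [zonal_zero, laplacian_one]
  | one =>
    have : zonal w 1 = (2 : K) • (linearForm w * 1) := by
      rw [zonal_one, mul_one, smul_eq_C_mul, map_ofNat]
    rw [this, map_smul, laplacian_linearForm_mul, laplacian_one]
    simp
  | more n ih ih_succ =>
    have : zonal w (n + 2) = (2 : K) • (linearForm w * zonal w (n + 1)) -
        (∑ i, w i ^ 2) • (radiusSq ι K * zonal w n) := by
      rw [zonal_add_two, smul_eq_C_mul, smul_eq_C_mul, map_ofNat, mul_assoc, mul_assoc]
    rw [this, map_sub, map_smul, map_smul, laplacian_linearForm_mul,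
      laplacian_radiusSq_mul (isHomogeneous_zonal w n), ih, ih_succ, dirDeriv_zonal_succ, hι,
      smul_eq_C_mul, smul_eq_C_mul, map_ofNat]
    push_cast
    ring

end PolynomialAlgebra

section PolarCoordinates

open Module (finrank)

lemma integral_volumeIoiPow {F : Type*} [NormedAddCommGroup F] [NormedSpace ℝ F] (n : ℕ)
    (f : ℝ → F) :
    ∫ r : Set.Ioi (0 : ℝ), f r ∂.volumeIoiPow n = ∫ r in Set.Ioi (0 : ℝ), r ^ n • f r := by
  simp only [Measure.volumeIoiPow, ENNReal.ofReal]
  rw [integral_withDensity_eq_integral_smul (by fun_prop),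
    integral_subtype_comap measurableSet_Ioi fun r => Real.toNNReal (r ^ n) • f r]
  refine setIntegral_congr_fun measurableSet_Ioi fun r hr => ?_
  simp only [NNReal.smul_def, Real.coe_toNNReal _ (pow_nonneg (le_of_lt hr) n)]

lemma integral_smul_of_homogeneous {E F : Type*} [NormedAddCommGroup E] [NormedSpace ℝ E]
    [FiniteDimensional ℝ E] [Nontrivial E] [MeasurableSpace E] [BorelSpace E]
    [NormedAddCommGroup F] [NormedSpace ℝ F] (μ : Measure E) [μ.IsAddHaarMeasure]
    {f : E → F} {k : ℕ} (hf : ∀ r > (0 : ℝ), ∀ x, f (r • x) = r ^ k • f x) (g : ℝ → ℝ) :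
    ∫ x, g ‖x‖ • f x ∂μ =
      (∫ r in Set.Ioi (0 : ℝ), r ^ (k + (finrank ℝ E - 1)) * g r) •
        ∫ ω : Metric.sphere (0 : E) 1, f ω ∂μ.toSphere :=
  calc
    ∫ x, g ‖x‖ • f x ∂μ = ∫ x : ({0}ᶜ : Set E), g ‖x.1‖ • f x.1 ∂(μ.comap (↑)) := by
      rw [integral_subtype_comap (measurableSet_singleton _).compl fun x => g ‖x‖ • f x,
        restrict_compl_singleton]
    _ = ∫ y, (g y.2 * y.2 ^ k) • f y.1 ∂μ.toSphere.prod (.volumeIoiPow (finrank ℝ E - 1)) := by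
      rw [← μ.measurePreserving_homeomorphUnitSphereProd.integral_comp
        (Homeomorph.measurableEmbedding _)]
      refine integral_congr_ae (.of_forall fun x => ?_)
      have hx : 0 < ‖x.1‖ := norm_pos_iff.2 x.2
      simp only [homeomorphUnitSphereProd_apply_snd_coe, homeomorphUnitSphereProd_apply_fst_coe,
        mul_smul, ← hf _ hx, smul_inv_smul₀ hx.ne']
    _ = ∫ y, (g y.1 * y.1 ^ k) • f y.2
          ∂(Measure.volumeIoiPow (finrank ℝ E - 1)).prod μ.toSphere :=
      (integral_prod_swap _).symm
    _ = (∫ r : Set.Ioi (0 : ℝ), g r * r ^ k ∂.volumeIoiPow (finrank ℝ E - 1)) •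
          ∫ ω : Metric.sphere (0 : E) 1, f ω ∂μ.toSphere :=
      integral_prod_smul (fun r : Set.Ioi (0 : ℝ) => g r * r ^ k)
        fun ω : Metric.sphere (0 : E) 1 => f ω
    _ = _ := by
      rw [integral_volumeIoiPow _ fun r => g r * r ^ k]
      congr 2 with r
      rw [smul_eq_mul]
      ring

/-- The moments `∫₀^∞ rᵏ exp (-r²) dr` of the half-line Gaussian. -/
def radialMoment (k : ℕ) : ℝ := ∫ r in Set.Ioi (0 : ℝ), r ^ k * Real.exp (-r ^ 2)

lemma radialMoment_eq_Gamma (k : ℕ) : radialMoment k = 1 / 2 * Real.Gamma ((k + 1) / 2) := by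
  simpa [radialMoment] using
    integral_rpow_mul_exp_neg_rpow (p := 2) (q := k) two_pos
      (neg_one_lt_zero.trans_le k.cast_nonneg)

lemma radialMoment_pos (k : ℕ) : 0 < radialMoment k := by
  rw [radialMoment_eq_Gamma]
  have := Real.Gamma_pos_of_pos (s := ((k : ℝ) + 1) / 2) (by positivity)
  positivity

lemma radialMoment_add_two (k : ℕ) : radialMoment (k + 2) = (k + 1) / 2 * radialMoment k := by
  rw [radialMoment_eq_Gamma, radialMoment_eq_Gamma]
  have shift : (((k + 2 : ℕ) : ℝ) + 1) / 2 = (k + 1) / 2 + 1 := by push_cast; ring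
  rw [shift, Real.Gamma_add_one (by positivity)]
  ring

lemma integrable_norm_pow_mul_exp_neg_norm_sq {E : Type*} [NormedAddCommGroup E] [NormedSpace ℝ E]
    [FiniteDimensional ℝ E] [Nontrivial E] [MeasurableSpace E] [BorelSpace E]
    (μ : Measure E) [μ.IsAddHaarMeasure] (k : ℕ) :
    Integrable (fun x => ‖x‖ ^ k * Real.exp (-‖x‖ ^ 2)) μ := by
  rw [integrable_fun_norm_addHaar μ (f := fun r => r ^ k * Real.exp (-r ^ 2))]
  have h := integrableOn_rpow_mul_exp_neg_rpow (p := 2) (s := (finrank ℝ E - 1 + k : ℕ))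
    (neg_one_lt_zero.trans_le (Nat.cast_nonneg _)) two_pos
  refine h.congr_fun (fun r _ => ?_) measurableSet_Ioi
  simp only [Real.rpow_natCast, Real.rpow_ofNat, pow_add, smul_eq_mul, mul_assoc]

end PolarCoordinates

section SphereIntegral

variable {ι : Type*}

lemma norm_eval_le_of_isHomogeneous {K : Type*} [NormedField K] {p : MvPolynomial ι K} {k : ℕ}
    (hp : p.IsHomogeneous k) {v : ι → K} {r : ℝ} (hv : ∀ i, ‖v i‖ ≤ r) :
    ‖eval v p‖ ≤ (∑ a ∈ p.support, ‖coeff a p‖) * r ^ k := by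
  rw [eval_eq, Finset.sum_mul]
  refine norm_sum_le_of_le _ fun a ha => ?_
  rw [norm_mul, norm_prod, hp.degree_eq_sum_deg_support ha, ← Finset.prod_pow_eq_pow_sum]
  gcongr with i
  rw [norm_pow]
  gcongr
  exact hv i

/-- Evaluation of a complex polynomial at a real point; `evalR` is the four-variable case. -/
abbrev evalReal (x : EuclideanSpace ℝ ι) : MvPolynomial ι ℂ →+* ℂ := eval fun i => (x i : ℂ)

lemma evalReal_smul_of_isHomogeneous {p : MvPolynomial ι ℂ} {k : ℕ} (hp : p.IsHomogeneous k)
    (r : ℝ) (x : EuclideanSpace ℝ ι) : evalReal (r • x) p = r ^ k • evalReal x p := by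
  rw [Complex.real_smul, Complex.ofReal_pow, ← eval_smul_of_isHomogeneous hp]
  simp [evalReal, Pi.smul_def]

lemma continuous_evalReal (p : MvPolynomial ι ℂ) : Continuous fun x => evalReal x p :=
  (MvPolynomial.continuous_eval p).comp (by fun_prop)

lemma hasLineDerivAt_evalReal [DecidableEq ι] (p : MvPolynomial ι ℂ) (i : ι)
    (x : EuclideanSpace ℝ ι) :
    HasLineDerivAt ℝ (fun y => evalReal y p) (evalReal x (pderiv i p)) x
      (EuclideanSpace.single i 1) := by
  have coordinate (j : ι) : HasLineDerivAt ℝ (fun y : EuclideanSpace ℝ ι => (y j : ℂ))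
      ((Pi.single i 1 : ι → ℂ) j) x (EuclideanSpace.single i 1) := by
    have h := (((hasDerivAt_id (0 : ℝ)).mul_const ((Pi.single i 1 : ι → ℝ) j)).const_add
      (x j)).ofReal_comp
    simpa [HasLineDerivAt, Pi.single_apply, apply_ite] using h
  unfold HasLineDerivAt at coordinate ⊢
  induction p using MvPolynomial.induction_on with
  | C a => simpa using hasDerivAt_const (0 : ℝ) a
  | add p q hp hq => simpa using! hp.add hq
  | mul_X p j hp =>
    convert! hp.mul (coordinate j) using 1
    · ext t
      simp
    · by_cases hij : j = i <;> simp [pderiv_X, hij, mul_comm, add_comm]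

variable [Fintype ι]

lemma hasLineDerivAt_exp_neg_norm_sq [DecidableEq ι] (i : ι) (x : EuclideanSpace ℝ ι) :
    HasLineDerivAt ℝ (fun y : EuclideanSpace ℝ ι => Real.exp (-‖y‖ ^ 2))
      (-2 * x i * Real.exp (-‖x‖ ^ 2)) x (EuclideanSpace.single i 1) := by
  have h := ((hasStrictFDerivAt_norm_sq x).hasFDerivAt.neg.exp).hasLineDerivAt
    (EuclideanSpace.single i 1)
  convert! h using 1
  simp [EuclideanSpace.inner_single_right]
  ring

lemma integrable_exp_smul_evalReal [Nonempty ι] {p : MvPolynomial ι ℂ} {k : ℕ}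
    (hp : p.IsHomogeneous k) :
    Integrable fun x : EuclideanSpace ℝ ι => Real.exp (-‖x‖ ^ 2) • evalReal x p := by
  have dominating := (integrable_norm_pow_mul_exp_neg_norm_sq
    (volume : Measure (EuclideanSpace ℝ ι)) k).const_mul (∑ a ∈ p.support, ‖coeff a p‖)
  refine dominating.mono' ?_ (.of_forall fun x => ?_)
  · have := continuous_evalReal p
    fun_prop
  · have bound := norm_eval_le_of_isHomogeneous hp (v := fun i => (x i : ℂ)) (r := ‖x‖)
      fun i => by simpa using PiLp.norm_apply_le x i
    rw [norm_smul, Real.norm_of_nonneg (Real.exp_nonneg _), ← mul_assoc,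
      mul_comm (Real.exp _)]
    gcongr

lemma integral_exp_smul_evalReal_pderiv [Nonempty ι] {p : MvPolynomial ι ℂ} {k : ℕ}
    (hp : p.IsHomogeneous k) (i : ι) :
    ∫ x : EuclideanSpace ℝ ι, Real.exp (-‖x‖ ^ 2) • evalReal x (pderiv i p) =
      2 * ∫ x : EuclideanSpace ℝ ι, Real.exp (-‖x‖ ^ 2) • evalReal x (X i * p) := by
  classical
  have hX : (X i * p).IsHomogeneous (1 + k) := (isHomogeneous_X ℂ i).mul hp
  have by_parts := integral_bilinear_hasLineDerivAt_right_eq_neg_left_of_integrable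
    (μ := volume) (B := ContinuousLinearMap.lsmul ℝ ℝ (E := ℂ))
    (f := fun x : EuclideanSpace ℝ ι => Real.exp (-‖x‖ ^ 2))
    (g := fun x => evalReal x p) ?_ (integrable_exp_smul_evalReal hp.pderiv)
    (integrable_exp_smul_evalReal hp)
    (fun x _ => hasLineDerivAt_exp_neg_norm_sq i x) (fun x _ => hasLineDerivAt_evalReal p i x)
  · simp only [ContinuousLinearMap.lsmul_apply] at by_parts
    rw [by_parts, ← integral_neg, ← integral_const_mul]
    congr 1 with x
    simp
    ring
  · refine ((integrable_exp_smul_evalReal hX).const_mul (-2)).congr (.of_forall fun x => ?_)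
    simp
    ring

lemma integrable_toSphere_of_continuous {f : Metric.sphere (0 : EuclideanSpace ℝ ι) 1 → ℂ}
    (hf : Continuous f) : Integrable f (volume : Measure (EuclideanSpace ℝ ι)).toSphere :=
  hf.integrable_of_hasCompactSupport (.of_compactSpace f)

/-- Integration of polynomials over the unit sphere of `ℝ^ι`, against the surface measure. -/
def sphereIntegral : MvPolynomial ι ℂ →ₗ[ℂ] ℂ where
  toFun p := ∫ ω : Metric.sphere (0 : EuclideanSpace ℝ ι) 1, evalReal ω p ∂volume.toSphere
  map_add' p q := by
    simp only [map_add]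
    exact integral_add
      (integrable_toSphere_of_continuous ((continuous_evalReal p).comp continuous_subtype_val))
      (integrable_toSphere_of_continuous ((continuous_evalReal q).comp continuous_subtype_val))
  map_smul' c p := by
    simp only [smul_eval, RingHom.id_apply, smul_eq_mul, integral_const_mul]

lemma sphereIntegral_apply (p : MvPolynomial ι ℂ) :
    sphereIntegral p =
      ∫ ω : Metric.sphere (0 : EuclideanSpace ℝ ι) 1, evalReal ω p ∂volume.toSphere := rfl

lemma integral_exp_smul_evalReal [Nonempty ι] {p : MvPolynomial ι ℂ} {k : ℕ}
    (hp : p.IsHomogeneous k) :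
    ∫ x : EuclideanSpace ℝ ι, Real.exp (-‖x‖ ^ 2) • evalReal x p =
      radialMoment (k + (Fintype.card ι - 1)) * sphereIntegral p := by
  have h := integral_smul_of_homogeneous (volume : Measure (EuclideanSpace ℝ ι))
    (f := fun x => evalReal x p) (fun r _ x => evalReal_smul_of_isHomogeneous hp r x)
    (fun r => Real.exp (-r ^ 2))
  rwa [finrank_euclideanSpace, Complex.real_smul] at h

/- Integration by parts on the sphere: both sides are computed by integrating by parts against the
Gaussian `exp (-‖x‖²)` in polar coordinates. -/
lemma sphereIntegral_pderiv [Nonempty ι] {p : MvPolynomial ι ℂ} {k : ℕ} (hp : p.IsHomogeneous k)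
    (i : ι) :
    sphereIntegral (pderiv i p) =
      ((k + (Fintype.card ι - 1) : ℕ) : ℂ) * sphereIntegral (X i * p) := by
  have by_parts := integral_exp_smul_evalReal_pderiv hp i
  rw [integral_exp_smul_evalReal ((isHomogeneous_X ℂ i).mul hp)] at by_parts
  obtain _ | k := k
  · have pderiv_eq_zero := pderiv_eq_zero_of_isHomogeneous_zero hp i
    have pos : (radialMoment (1 + 0 + (Fintype.card ι - 1)) : ℂ) ≠ 0 := by
      exact_mod_cast (radialMoment_pos _).ne'
    have sphereIntegral_eq_zero : sphereIntegral (X i * p) = 0 := by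
      simpa [pderiv_eq_zero, pos] using by_parts.symm
    rw [pderiv_eq_zero, sphereIntegral_eq_zero, map_zero, mul_zero]
  · rw [integral_exp_smul_evalReal hp.pderiv] at by_parts
    set m := k + (Fintype.card ι - 1)
    have hm : 1 + (k + 1) + (Fintype.card ι - 1) = m + 2 := by grind
    have hm' : k + 1 + (Fintype.card ι - 1) = m + 1 := by grind
    have pos : (radialMoment m : ℂ) ≠ 0 := by exact_mod_cast (radialMoment_pos m).ne'
    rw [hm, radialMoment_add_two] at by_parts
    rw [hm']
    refine mul_left_cancel₀ pos ?_
    push_cast at by_parts ⊢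
    linear_combination by_parts

lemma sphereIntegral_dirDeriv [Nonempty ι] {p : MvPolynomial ι ℂ} {k : ℕ}
    (hp : p.IsHomogeneous k) (w : ι → ℂ) :
    sphereIntegral (dirDeriv w p) =
      ((k + (Fintype.card ι - 1) : ℕ) : ℂ) * sphereIntegral (linearForm w * p) := by
  simp only [dirDeriv_apply, linearForm, ← smul_eq_C_mul, Finset.sum_mul, map_sum, map_smul,
    smul_mul_assoc, Finset.mul_sum, sphereIntegral_pderiv hp, smul_eq_mul, mul_left_comm]

lemma evalReal_radiusSq (x : EuclideanSpace ℝ ι) : evalReal x (radiusSq ι ℂ) = (‖x‖ : ℂ) ^ 2 := by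
  rw [← Complex.ofReal_pow, EuclideanSpace.real_norm_sq_eq]
  simp [radiusSq]

lemma sphereIntegral_radiusSq_mul (p : MvPolynomial ι ℂ) :
    sphereIntegral (radiusSq ι ℂ * p) = sphereIntegral p := by
  simp only [sphereIntegral_apply, map_mul, evalReal_radiusSq, norm_eq_of_mem_sphere]
  simp

/- Green's identity: integrate by parts the divergence-free field `p ∇q - q ∇p`, whose radial
component is `(l - k) p q`. -/
lemma sphereIntegral_mul_eq_zero_of_harmonic (hι : 1 < Fintype.card ι) {p q : MvPolynomial ι ℂ}
    {k l : ℕ} (hp : p.IsHomogeneous k) (hq : q.IsHomogeneous l) (hlp : laplacian p = 0)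
    (hlq : laplacian q = 0) (hkl : k ≠ l) : sphereIntegral (p * q) = 0 := by
  have : Nonempty ι := Fintype.card_pos_iff.1 (zero_lt_one.trans hι)
  have homogeneous (i : ι) : (p * pderiv i q - q * pderiv i p).IsHomogeneous (k + l - 1) :=
    (isHomogeneous_mul_pderiv hp hq i).sub (add_comm l k ▸ isHomogeneous_mul_pderiv hq hp i)
  have divergence : ∑ i, pderiv i (p * pderiv i q - q * pderiv i p) = 0 := by
    calc _ = p * laplacian q - q * laplacian p := by
          simp only [laplacian_apply, Finset.mul_sum, ← Finset.sum_sub_distrib, map_sub,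
            Derivation.leibniz, smul_eq_mul]
          exact Finset.sum_congr rfl fun i _ => by ring
      _ = 0 := by rw [hlp, hlq, mul_zero, mul_zero, sub_zero]
  have radial : ∑ i, X i * (p * pderiv i q - q * pderiv i p) = ((l : ℂ) - k) • (p * q) := by
    calc _ = p * ∑ i, X i * pderiv i q - q * ∑ i, X i * pderiv i p := by
          simp only [Finset.mul_sum, ← Finset.sum_sub_distrib]
          exact Finset.sum_congr rfl fun i _ => by ring
      _ = _ := by
          rw [hp.sum_X_mul_pderiv, hq.sum_X_mul_pderiv, smul_eq_C_mul]
          simp only [nsmul_eq_mul, map_sub, map_natCast]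
          ring
  have by_parts := congrArg sphereIntegral divergence
  simp only [map_sum, sphereIntegral_pderiv (homogeneous _)] at by_parts
  rw [← Finset.mul_sum, ← map_sum, radial, map_smul, map_zero, smul_eq_mul, mul_eq_zero,
    mul_eq_zero, sub_eq_zero, Nat.cast_eq_zero, Nat.cast_inj] at by_parts
  grind

end SphereIntegral

section ReproducingProperty

variable {ι : Type*} [Fintype ι]

lemma sphereIntegral_mul_zonal_succ (hι : Fintype.card ι = 4) {φ : MvPolynomial ι ℂ} {m : ℕ}
    (hφ : φ.IsHomogeneous (m + 1)) (hl : laplacian φ = 0) (w : ι → ℂ) :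
    sphereIntegral (φ * zonal w (m + 1)) = 2 * sphereIntegral (linearForm w * (φ * zonal w m)) := by
  rw [← smul_eq_mul (2 : ℂ), ← map_smul, smul_eq_C_mul, map_ofNat]
  obtain _ | m := m
  · rw [zonal_one, zonal_zero]
    ring_nf
  · have recursion : φ * zonal w (m + 2) = 2 * (linearForm w * (φ * zonal w (m + 1))) -
        (∑ i, w i ^ 2) • (radiusSq ι ℂ * (φ * zonal w m)) := by
      rw [smul_eq_C_mul, zonal_add_two]
      ring
    rw [recursion, map_sub, map_smul, sphereIntegral_radiusSq_mul,
      sphereIntegral_mul_eq_zero_of_harmonic (by omega) hφ (isHomogeneous_zonal w m) hl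
        (laplacian_zonal hι w m) (by omega), smul_zero, sub_zero]

lemma sphereIntegral_mul_dirDeriv_zonal (hι : Fintype.card ι = 4) {φ : MvPolynomial ι ℂ} {m : ℕ}
    (hφ : φ.IsHomogeneous (m + 1)) (hl : laplacian φ = 0) (w : ι → ℂ) :
    sphereIntegral (φ * dirDeriv w (zonal w m)) = 0 := by
  obtain _ | m := m
  · rw [zonal_zero, Derivation.map_one_eq_zero, mul_zero, map_zero]
  · have : φ * dirDeriv w (zonal w (m + 1)) =
        (((m : ℂ) + 2) * ∑ i, w i ^ 2) • (φ * zonal w m) := by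
      rw [dirDeriv_zonal_succ, smul_eq_C_mul, map_mul, map_add, map_natCast, map_ofNat]
      ring
    rw [this, map_smul, sphereIntegral_mul_eq_zero_of_harmonic (by omega) hφ
      (isHomogeneous_zonal w m) hl (laplacian_zonal hι w m) (by omega), smul_zero]

/- Induct on the degree through `dirDeriv w φ`: integrating the derivative of `φ * zonal w m` by
parts raises both degrees by one. -/
theorem sphereIntegral_mul_zonal (hι : Fintype.card ι = 4) {φ : MvPolynomial ι ℂ} {m : ℕ}
    (hφ : φ.IsHomogeneous m) (hl : laplacian φ = 0) (w : ι → ℂ) :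
    ((m : ℂ) + 1) * sphereIntegral (φ * zonal w m) =
      sphereIntegral (1 : MvPolynomial ι ℂ) * eval w φ := by
  have : Nonempty ι := Fintype.card_pos_iff.1 (by omega)
  induction m generalizing φ with
  | zero =>
    obtain ⟨c, rfl⟩ : ∃ c, φ = C c :=
      ⟨_, totalDegree_eq_zero_iff_eq_C.1 ((totalDegree_zero_iff_isHomogeneous ι).2 hφ)⟩
    rw [zonal_zero, ← smul_eq_C_mul, map_smul, eval_C, smul_eq_mul]
    push_cast
    ring
  | succ m ih =>
    have by_parts := sphereIntegral_dirDeriv (hφ.mul (isHomogeneous_zonal w m)) w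
    rw [Derivation.leibniz, map_add, smul_eq_mul, smul_eq_mul,
      sphereIntegral_mul_dirDeriv_zonal hι hφ hl, zero_add, mul_comm (zonal w m), hι] at by_parts
    have derivative := ih (isHomogeneous_dirDeriv w hφ) (by rw [laplacian_dirDeriv, hl, map_zero])
    rw [eval_dirDeriv_self hφ, by_parts] at derivative
    rw [sphereIntegral_mul_zonal_succ hι hφ hl]
    refine mul_left_cancel₀ (Nat.cast_add_one_ne_zero m : (m + 1 : ℂ) ≠ 0) ?_
    push_cast at derivative ⊢
    linear_combination derivative

lemma sphereIntegral_one_fin_four :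
    sphereIntegral (1 : MvPolynomial (Fin 4) ℂ) = 2 * Real.pi ^ 2 := by
  have volume_ball : volume.real (Metric.ball (0 : E4) 1) = Real.pi ^ 2 / 2 := by
    rw [Measure.real, InnerProductSpace.volume_ball_of_dim_even (k := 2) (by simp)]
    simp only [ENNReal.ofReal_one, one_pow, one_mul, Nat.factorial_two, Nat.cast_ofNat]
    exact ENNReal.toReal_ofReal (by positivity)
  rw [sphereIntegral_apply]
  simp only [map_one, integral_const, Measure.toSphere_real_apply_univ, volume_ball,
    finrank_euclideanSpace_fin, Complex.real_smul]
  push_cast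
  ring

end ReproducingProperty

section KernelExpansion

open Polynomial (dickson)
open scoped Matrix.Norms.L2Operator

lemma exists_add_eq_and_mul_eq {K : Type*} [Field K] [IsAlgClosed K] (s q : K) :
    ∃ a b : K, a + b = s ∧ a * b = q := by
  obtain ⟨a, ha⟩ := IsAlgClosed.exists_root
    (.C 1 * .X ^ 2 + .C (-s) * .X + .C q : Polynomial K)
    (by rw [Polynomial.degree_quadratic one_ne_zero]; decide)
  simp only [Polynomial.IsRoot.def, Polynomial.eval_add, Polynomial.eval_mul, Polynomial.eval_C,
    Polynomial.eval_pow, Polynomial.eval_X] at ha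
  exact ⟨a, s - a, by ring, by linear_combination -ha⟩

lemma evalReal_zonal {ι : Type*} [Fintype ι] {x : EuclideanSpace ℝ ι} (hx : ‖x‖ = 1)
    {w : ι → ℂ} {a b : ℂ} (hadd : a + b = 2 * evalReal x (linearForm w))
    (hmul : a * b = ∑ i, w i ^ 2) (n : ℕ) :
    evalReal x (zonal w n) = (dickson 2 (a * b) n).eval (a + b) := by
  rw [zonal, ← Polynomial.eval_map_apply, Polynomial.map_dickson, map_mul, map_mul,
    evalReal_radiusSq, eval_C, hx, hadd, hmul, map_ofNat, Complex.ofReal_one, one_pow, mul_one]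

lemma NC_sub_smul (V : Fin 4 → ℂ) (z : ℂ) (ω : Metric.sphere (0 : E4) 1) :
    NC (V - z • fun i => ((ω : E4) i : ℂ)) =
      NC V - 2 * evalReal (ω : E4) (linearForm V) * z + z ^ 2 := by
  have unit := NC_ofReal_of_mem_sphere ω
  simp only [NC, evalReal, linearForm, Fin.sum_univ_four, map_add, map_mul, eval_C, eval_X,
    Pi.sub_apply, Pi.smul_apply, smul_eq_mul] at unit ⊢
  linear_combination z ^ 2 * unit

lemma exists_roots_NC_sub_sphere (V : Fin 4 → ℂ) (ω : Metric.sphere (0 : E4) 1) :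
    ∃ a b : ℂ, ‖a‖ ≤ ‖Zmat V‖ ∧ ‖b‖ ≤ ‖Zmat V‖ ∧
      NC (V - fun i => ((ω : E4) i : ℂ)) = (1 - a) * (1 - b) ∧
      ∀ n, evalReal (ω : E4) (zonal V n) = (dickson 2 (a * b) n).eval (a + b) := by
  obtain ⟨a, b, hadd, hmul⟩ :=
    exists_add_eq_and_mul_eq (2 * evalReal (ω : E4) (linearForm V)) (NC V)
  have factor (z : ℂ) : NC (V - z • fun i => ((ω : E4) i : ℂ)) = (z - a) * (z - b) := by
    rw [NC_sub_smul, ← hadd, ← hmul]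
    ring
  refine ⟨a, b, norm_le_l2_opNorm_Zmat_of_NC_sub_smul_eq_zero ω ?_,
    norm_le_l2_opNorm_Zmat_of_NC_sub_smul_eq_zero ω ?_, ?_,
    evalReal_zonal (norm_eq_of_mem_sphere ω) hadd hmul⟩
  · rw [factor, sub_self, zero_mul]
  · rw [factor, sub_self, mul_zero]
  · rw [← factor, one_smul]

lemma norm_evalReal_zonal_le (V : Fin 4 → ℂ) (ω : Metric.sphere (0 : E4) 1) (n : ℕ) :
    ‖evalReal (ω : E4) (zonal V n)‖ ≤ (n + 1) * ‖Zmat V‖ ^ n := by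
  obtain ⟨a, b, ha, hb, -, eval_eq⟩ := exists_roots_NC_sub_sphere V ω
  exact eval_eq n ▸ norm_eval_dickson_two_le ha hb n

lemma hasSum_evalReal_zonal {V : Fin 4 → ℂ} (hV : ‖Zmat V‖ < 1) (ω : Metric.sphere (0 : E4) 1) :
    HasSum (fun n => evalReal (ω : E4) (zonal V n)) (NC (V - fun i => ((ω : E4) i : ℂ)))⁻¹ := by
  obtain ⟨a, b, ha, hb, factor, eval_eq⟩ := exists_roots_NC_sub_sphere V ω
  simp only [eval_eq, factor]
  exact hasSum_eval_dickson_two (ha.trans_lt hV) (hb.trans_lt hV)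

lemma NC_sub_sphere_ne_zero {V : Fin 4 → ℂ} (hV : ‖Zmat V‖ < 1) (ω : Metric.sphere (0 : E4) 1) :
    NC (V - fun i => ((ω : E4) i : ℂ)) ≠ 0 := by
  intro h
  have := norm_le_l2_opNorm_Zmat_of_NC_sub_smul_eq_zero (z := 1) ω (by rwa [one_smul])
  exact absurd hV (by simpa using this)

end KernelExpansion

section PoissonFormula

open scoped Matrix.Norms.L2Operator

lemma hasSum_sphereIntegral_mul_zonal {φ : MvPolynomial (Fin 4) ℂ} {m : ℕ}
    (hφ : φ.IsHomogeneous m) {V : Fin 4 → ℂ} (hV : ‖Zmat V‖ < 1) :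
    HasSum (fun n => sphereIntegral (φ * zonal V n))
      (∫ ω : Metric.sphere (0 : E4) 1,
        evalReal (ω : E4) φ / NC (V - fun i => ((ω : E4) i : ℂ)) ∂volume.toSphere) := by
  set M := ∑ a ∈ φ.support, ‖coeff a φ‖
  have summable_bound : Summable fun n : ℕ => M * ((n + 1) * ‖Zmat V‖ ^ n) := by
    have := (summable_pow_mul_geometric_of_norm_lt_one 1 (r := ‖Zmat V‖) (by simpa using hV)).add
      (summable_geometric_of_lt_one (norm_nonneg _) hV)
    exact (this.congr fun n => by ring).mul_left M
  simp only [sphereIntegral_apply]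
  refine hasSum_integral_of_dominated_convergence (fun n _ => M * ((n + 1) * ‖Zmat V‖ ^ n))
    (fun n => ?_) (fun n => .of_forall fun ω => ?_) (.of_forall fun _ => summable_bound)
    (integrable_const _) (.of_forall fun ω => ?_)
  · exact ((continuous_evalReal _).comp continuous_subtype_val).aestronglyMeasurable
  · have hM := norm_eval_le_of_isHomogeneous hφ (v := fun i => ((ω : E4) i : ℂ)) (r := 1)
      fun i => by simpa using (PiLp.norm_apply_le (ω : E4) i).trans_eq (norm_eq_of_mem_sphere ω)
    rw [one_pow, mul_one] at hM
    rw [map_mul, norm_mul]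
    gcongr
    exact norm_evalReal_zonal_le V ω n
  · simpa only [map_mul, div_eq_mul_inv] using (hasSum_evalReal_zonal hV ω).mul_left _

lemma integral_evalReal_div_NC_sub {φ : MvPolynomial (Fin 4) ℂ} {m : ℕ} (hφ : φ.IsHomogeneous m)
    (hl : laplacian φ = 0) {V : Fin 4 → ℂ} (hV : ‖Zmat V‖ < 1) :
    (m + 1) * ∫ ω : Metric.sphere (0 : E4) 1,
        evalReal (ω : E4) φ / NC (V - fun i => ((ω : E4) i : ℂ)) ∂volume.toSphere =
      2 * Real.pi ^ 2 * eval V φ := by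
  have single_term := hasSum_single m fun n hn =>
    sphereIntegral_mul_eq_zero_of_harmonic (by simp) hφ (isHomogeneous_zonal V n) hl
      (laplacian_zonal (by simp) V n) hn.symm
  rw [(hasSum_sphereIntegral_mul_zonal hφ hV).unique single_term,
    sphereIntegral_mul_zonal (by simp) hφ hl, sphereIntegral_one_fin_four]

lemma tdegP_sum {α : Type*} (s : Finset α) (f : α → MvPolynomial (Fin 4) ℂ) :
    tdegP (∑ k ∈ s, f k) = ∑ k ∈ s, tdegP (f k) := by
  simp only [tdegP, map_sum, Finset.mul_sum, Finset.sum_add_distrib]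
  rw [Finset.sum_comm]

lemma tdegP_of_isHomogeneous {φ : MvPolynomial (Fin 4) ℂ} {m : ℕ} (hφ : φ.IsHomogeneous m) :
    tdegP φ = ((m : ℂ) + 1) • φ := by
  rw [tdegP, hφ.sum_X_mul_pderiv, add_smul, one_smul, Nat.cast_smul_eq_nsmul, add_comm]

lemma NC_smul (c : ℂ) (V : Fin 4 → ℂ) : NC (c • V) = c ^ 2 * NC V := by
  simp only [NC, Pi.smul_apply, smul_eq_mul, mul_pow, Finset.mul_sum]

lemma sphereInt_const_mul (R : ℝ) (c : ℂ) (g : E4 → ℂ) :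
    sphereInt R (fun X => c * g X) = c * sphereInt R g := by
  rw [sphereInt, integral_const_mul, ← mul_smul_comm, sphereInt]

lemma sphereInt_finsetSum {R : ℝ} {α : Type*} {s : Finset α} {g : α → E4 → ℂ}
    (hg : ∀ k ∈ s, Integrable (fun ω : Metric.sphere (0 : E4) 1 => g k (R • (ω : E4)))
      (volume : Measure E4).toSphere) :
    sphereInt R (fun X => ∑ k ∈ s, g k X) = ∑ k ∈ s, sphereInt R (g k) := by
  rw [sphereInt, integral_finsetSum s hg, Finset.smul_sum]
  rfl

variable {R : ℝ} {V : Fin 4 → ℂ}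

lemma NC_smul_sub_smul (V : Fin 4 → ℂ) (x : E4) :
    NC ((R : ℂ) • V - fun i => ((R • x) i : ℂ)) = (R : ℂ) ^ 2 * NC (V - fun i => (x i : ℂ)) := by
  rw [← NC_smul, smul_sub]
  congr
  simp [Pi.smul_def]

lemma sphereInt_tdegP_div_of_isHomogeneous (hR : R ≠ 0) (hV : ‖Zmat V‖ < 1)
    {φ : MvPolynomial (Fin 4) ℂ} {m : ℕ} (hφ : φ.IsHomogeneous m) (hl : laplacian φ = 0) :
    sphereInt R (fun X => evalR (tdegP φ) X / NC ((R : ℂ) • V - fun i => (X i : ℂ))) =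
      2 * Real.pi ^ 2 * R * eval ((R : ℂ) • V) φ := by
  have integrand (ω : E4) : evalR (tdegP φ) (R • ω) / NC ((R : ℂ) • V - fun i => ((R • ω) i : ℂ)) =
      ((m + 1) * R ^ m / R ^ 2) * (evalReal ω φ / NC (V - fun i => (ω i : ℂ))) := by
    rw [NC_smul_sub_smul, tdegP_of_isHomogeneous hφ, evalR, smul_eval,
      evalReal_smul_of_isHomogeneous hφ, Complex.real_smul]
    push_cast
    ring
  have hRC : (R : ℂ) ≠ 0 := by exact_mod_cast hR
  have unit := integral_evalReal_div_NC_sub hφ hl hV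
  simp only [sphereInt, integrand, integral_const_mul, Complex.real_smul,
    eval_smul_of_isHomogeneous hφ]
  push_cast
  field_simp
  linear_combination unit

lemma integrable_evalR_div_NC_sub (hR : R ≠ 0) (hV : ‖Zmat V‖ < 1) (φ : MvPolynomial (Fin 4) ℂ) :
    Integrable (fun ω : Metric.sphere (0 : E4) 1 =>
      evalR φ (R • (ω : E4)) / NC ((R : ℂ) • V - fun i => ((R • (ω : E4)) i : ℂ)))
      (volume : Measure E4).toSphere := by
  refine integrable_toSphere_of_continuous (.div ?_ ?_ fun ω => ?_)
  · exact (continuous_evalReal φ).comp (by fun_prop)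
  · unfold NC
    fun_prop
  · rw [NC_smul_sub_smul]
    exact mul_ne_zero (by exact_mod_cast pow_ne_zero 2 hR) (NC_sub_sphere_ne_zero hV ω)

theorem sphereInt_tdegP_div {φ : MvPolynomial (Fin 4) ℂ} (hφ : lapP φ = 0) (hR : 0 < R)
    {W : Fin 4 → ℂ} (hW : (((R ^ 2 : ℝ) : ℂ) • (1 : Matrix (Fin 2) (Fin 2) ℂ)
      - Zmat W * (Zmat W).conjTranspose).PosDef) :
    sphereInt R (fun X => evalR (tdegP φ) X / NC (W - fun i => (X i : ℂ))) =
      2 * Real.pi ^ 2 * R * eval W φ := by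
  have hRC : (R : ℂ) ≠ 0 := by exact_mod_cast hR.ne'
  obtain ⟨V, rfl⟩ : ∃ V, W = (R : ℂ) • V := ⟨(R : ℂ)⁻¹ • W, by rw [smul_inv_smul₀ hRC]⟩
  have hV : ‖Zmat V‖ < 1 := by
    have h := l2_opNorm_lt_of_posDef_sub_mul_conjTranspose hR hW
    rw [Zmat_smul, norm_smul, Complex.norm_real, Real.norm_of_nonneg hR.le] at h
    exact (mul_lt_iff_lt_one_right hR).1 h
  have decomposition (x : E4) : evalR (tdegP φ) x =
      ∑ k ∈ Finset.range (φ.totalDegree + 1), evalR (tdegP (homogeneousComponent k φ)) x := by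
    simp only [evalR]
    rw [← map_sum, ← tdegP_sum, sum_homogeneousComponent]
  simp only [decomposition, Finset.sum_div]
  rw [sphereInt_finsetSum fun k _ => integrable_evalR_div_NC_sub hR.ne' hV _,
    Finset.sum_congr rfl fun k _ => sphereInt_tdegP_div_of_isHomogeneous hR.ne' hV
      (homogeneousComponent_isHomogeneous k φ) (laplacian_homogeneousComponent hφ k),
    ← Finset.mul_sum, ← map_sum, sum_homogeneousComponent]

end PoissonFormula

/-- If `φ₁, φ₂` are harmonic polynomials, `R₁, R₂ > 0` and `W ∈ 𝔻⁺_{R₁} ∩ 𝔻⁺_{R₂}`, then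
`(1/(2π²)²) ∫_{S³_{R₁}} ∫_{S³_{R₂}} (d̃eg φ₁)(X₁)(d̃eg φ₂)(X₂)/(N(W−X₁)N(W−X₂))
dS(X₂)dS(X₁)/(R₁R₂) = φ₁(W)·φ₂(W)`. -/
theorem stmt15 (φ₁ φ₂ : MvPolynomial (Fin 4) ℂ)
    (hφ₁ : lapP φ₁ = 0) (hφ₂ : lapP φ₂ = 0)
    (R₁ R₂ : ℝ) (hR₁ : 0 < R₁) (hR₂ : 0 < R₂) (W : Fin 4 → ℂ)
    (hW₁ : (((R₁ ^ 2 : ℝ) : ℂ) • (1 : Matrix (Fin 2) (Fin 2) ℂ)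
              - Zmat W * (Zmat W).conjTranspose).PosDef)
    (hW₂ : (((R₂ ^ 2 : ℝ) : ℂ) • (1 : Matrix (Fin 2) (Fin 2) ℂ)
              - Zmat W * (Zmat W).conjTranspose).PosDef) :
    ((1 / (2 * Real.pi ^ 2) ^ 2 / (R₁ * R₂) : ℝ) : ℂ) *
      sphereInt R₁ (fun X₁ =>
        sphereInt R₂ (fun X₂ =>
          evalR (tdegP φ₁) X₁ * evalR (tdegP φ₂) X₂ /
            (NC (W - fun i => ((X₁ i : ℝ) : ℂ)) * NC (W - fun i => ((X₂ i : ℝ) : ℂ)))))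
    = eval W φ₁ * eval W φ₂ := by
  simp only [mul_div_mul_comm, sphereInt_const_mul, sphereInt_tdegP_div hφ₂ hR₂ hW₂]
  simp only [mul_comm _ (2 * (Real.pi : ℂ) ^ 2 * R₂ * eval W φ₂), sphereInt_const_mul,
    sphereInt_tdegP_div hφ₁ hR₁ hW₁]
  have hR₁' : (R₁ : ℂ) ≠ 0 := by exact_mod_cast hR₁.ne'
  have hR₂' : (R₂ : ℂ) ≠ 0 := by exact_mod_cast hR₂.ne'
  have hpi : (Real.pi : ℂ) ≠ 0 := by exact_mod_cast Real.pi_ne_zero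
  push_cast
  field_simp
end
end
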